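/- arXiv:1202.3325 — 11 statements merged into one kernel-verified Lean document; each statement's English description precedes it below -/
import Mathlib

section
/- Let X be a Banach space and let T(t), t ≥ 0, be a C0-semigroup on X. The following four statements are equivalent: (1) there exists β of class KL such that ‖T(t)x‖_X ≤ β(‖x‖_X, t) for all x ∈ X and all t ≥ 0; (2) the semigroup is uniformly stable, i.e. ‖T(t)‖ → 0 as t → ∞ (operator norm); (3) the semigroup is uniformly exponentially stable, i.e. there exist M, ω > 0 such that ‖T(t)‖ ≤ M e^{−ωt} for all t ≥ 0; (4) there exist M, a > 0 such that ‖T(t)x‖_X ≤ M e^{−at} ‖x‖_X for all x ∈ X and all t ≥ 0. -/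
open Filter Set

/-- A function of class `K`: continuous on `[0,∞)`, strictly increasing there, zero at zero. -/
def ClassK (γ : ℝ → ℝ) : Prop :=
  ContinuousOn γ (Ici 0) ∧ StrictMonoOn γ (Ici 0) ∧ γ 0 = 0

/-- A function of class `KL`. -/
def ClassKL (β : ℝ → ℝ → ℝ) : Prop :=
  (∀ t ≥ (0:ℝ), ClassK fun r => β r t) ∧
  (∀ r > (0:ℝ), ContinuousOn (β r) (Ici 0) ∧ AntitoneOn (β r) (Ici 0) ∧
      Tendsto (β r) atTop (nhds 0))

/-- For a `C₀`-semigroup `T` on a Banach space `X` the following are equivalent: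
(1) a `KL` estimate `‖T(t)x‖ ≤ β(‖x‖, t)` (0-UGASx);
(2) uniform stability: `‖T(t)‖ → 0` as `t → ∞`;
(3) uniform exponential stability: `‖T(t)‖ ≤ M e^{-ωt}`;
(4) exponential 0-UGASx: `‖T(t)x‖ ≤ M e^{-at}‖x‖`. -/
theorem stmt1 {X : Type*} [NormedAddCommGroup X] [NormedSpace ℝ X] [CompleteSpace X]
    (T : ℝ → X →L[ℝ] X)
    (hT0 : T 0 = ContinuousLinearMap.id ℝ X)
    (hTsem : ∀ t ≥ (0:ℝ), ∀ s ≥ (0:ℝ), T (t + s) = (T t).comp (T s))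
    (hTcont : ∀ x : X, ContinuousOn (fun t => T t x) (Ici 0)) :
    List.TFAE [
      (∃ β, ClassKL β ∧ ∀ x : X, ∀ t ≥ (0:ℝ), ‖T t x‖ ≤ β ‖x‖ t),
      Tendsto (fun t => ‖T t‖) atTop (nhds 0),
      (∃ M ω : ℝ, 0 < M ∧ 0 < ω ∧ ∀ t ≥ (0:ℝ), ‖T t‖ ≤ M * Real.exp (-ω * t)),
      (∃ M a : ℝ, 0 < M ∧ 0 < a ∧ ∀ x : X, ∀ t ≥ (0:ℝ),
          ‖T t x‖ ≤ M * Real.exp (-a * t) * ‖x‖)] := by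
  tfae_have 1 → 2 := by
    rintro ⟨β, ⟨hK, hL⟩, hb⟩
    refine squeeze_zero' (Eventually.of_forall fun t => norm_nonneg _) ?_ (hL 1 one_pos).2.2
    filter_upwards [eventually_ge_atTop (0:ℝ)] with t ht
    obtain ⟨-, hm, h0⟩ := hK t ht
    have h1 : β 0 t < β 1 t :=
      hm (mem_Ici.2 le_rfl) (mem_Ici.2 zero_le_one) one_pos
    simp only at h0
    refine ContinuousLinearMap.opNorm_le_of_unit_norm (by linarith) fun x hx => ?_
    have := hb x t ht
    rwa [hx] at this
  tfae_have 2 → 3 := by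
    intro h
    obtain ⟨τ, hτ, hτ1⟩ :=
      ((h.eventually (eventually_le_nhds (Real.exp_pos (-1)))).and
        (eventually_ge_atTop (1:ℝ))).exists
    have hτ0 : 0 < τ := by linarith
    obtain ⟨C, hC⟩ := banach_steinhaus (g := fun s : Icc (0:ℝ) τ => T s) (by
      intro x
      obtain ⟨C, hC⟩ := isCompact_Icc.exists_bound_of_continuousOn
        ((hTcont x).mono (show Icc 0 τ ⊆ Ici 0 from Icc_subset_Ici_self))
      exact ⟨C, fun s => hC s s.2⟩)
    have hC0 : 0 ≤ C := (norm_nonneg _).trans (hC ⟨0, le_refl _, hτ0.le⟩)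
    have key : ∀ n : ℕ, ∀ s ∈ Icc (0:ℝ) τ, ‖T (n * τ + s)‖ ≤ Real.exp (-n) * C := by
      intro n s hs
      induction n with
      | zero => simpa using hC ⟨s, hs⟩
      | succ n ih =>
        have e : ((n + 1 : ℕ) : ℝ) * τ + s = τ + (n * τ + s) := by push_cast; ring
        have e2 : Real.exp (-((n + 1 : ℕ) : ℝ)) = Real.exp (-1) * Real.exp (-n) := by
          rw [← Real.exp_add]; congr 1; push_cast; ring
        have hs0 := hs.1
        rw [e, hTsem τ hτ0.le _ (by positivity), e2, mul_assoc]
        exact (ContinuousLinearMap.opNorm_comp_le _ _).trans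
          (mul_le_mul hτ ih (norm_nonneg _) (Real.exp_pos _).le)
    refine ⟨(C + 1) * Real.exp 1, 1 / τ, by positivity, by positivity, fun t ht => ?_⟩
    have h1 := Nat.floor_le (div_nonneg ht hτ0.le)
    have h2 := (Nat.lt_floor_add_one (t / τ)).le
    set n := ⌊t / τ⌋₊
    have h1' : n * τ ≤ t := (le_div_iff₀ hτ0).1 h1
    have h2' : t ≤ (n + 1) * τ := (div_le_iff₀ hτ0).1 h2
    have k := key n (t - n * τ) ⟨by linarith, by linarith⟩
    rw [add_sub_cancel] at k
    refine k.trans ?_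
    rw [mul_assoc, ← Real.exp_add, mul_comm]
    refine mul_le_mul (by linarith) (Real.exp_le_exp.2 ?_) (Real.exp_pos _).le (by linarith)
    have : -(1 / τ) * t = -(t / τ) := by ring
    rw [this]; linarith
  tfae_have 3 → 4 := by
    rintro ⟨M, ω, hM, hω, h⟩
    exact ⟨M, ω, hM, hω, fun x t ht => (T t).le_of_opNorm_le (h t ht) x⟩
  tfae_have 4 → 1 := by
    rintro ⟨M, a, hM, ha, h⟩
    refine ⟨fun r t => M * Real.exp (-a * t) * r, ⟨fun t ht => ⟨?_, ?_, ?_⟩,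
      fun r hr => ⟨?_, ?_, ?_⟩⟩, h⟩
    · fun_prop
    · intro x _ y _ hxy
      exact mul_lt_mul_of_pos_left hxy (by positivity)
    · simp
    · fun_prop
    · intro x _ y _ hxy
      have : -a * y ≤ -a * x := by nlinarith
      have := Real.exp_le_exp.2 this
      dsimp only
      gcongr
    · have h1 : Tendsto (fun t : ℝ => -a * t) atTop atBot :=
        tendsto_id.const_mul_atTop_of_neg (by linarith)
      have := ((Real.tendsto_exp_atBot.comp h1).const_mul M).mul_const r
      simpa using this
  tfae_finish
end

section
/- Let X be a Banach space, U a normed linear space, T(t), t ≥ 0, a C0-semigroup on X, and f : U → X a continuous map for which there is a class-K function γ with ‖f(v)‖_X ≤ γ(‖v‖_U) for all v ∈ U. For a bounded continuous input u : [0,∞) → U and x₀ ∈ X define the mild solution φ(t,x₀,u) = T(t)x₀ + ∫₀^t T(t−r) f(u(r)) dr (Bochner integral). Then the following are equivalent: (i) there exists β of class KL such that ‖φ(t,x₀,0)‖_X ≤ β(‖x₀‖_X, t) for all x₀, t (0-UGASx); (ii) there exist M, a > 0 with ‖φ(t,x₀,0)‖_X ≤ M e^{−at} ‖x₀‖_X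 for all x₀, t (exponential 0-UGASx); (iii) there exist β of class KL and γ̂ of class K such that ‖φ(t,x₀,u)‖_X ≤ β(‖x₀‖_X, t) + γ̂( sup_{s≥0} ‖u(s)‖_U ) for all x₀, all bounded continuous u and all t ≥ 0 (ISS); (iv) there exist M, a > 0 and γ̂ of class K such that ‖φ(t,x₀,u)‖_X ≤ M e^{−at} ‖x₀‖_X + γ̂( sup_{s≥0} ‖u(s)‖_U ) for all x₀, u, t (exponential ISS). -/
open Filter Set MeasureTheory intervalIntegral

/-- An admissible input: a bounded continuous function `[0,∞) → U`. -/
def IsInput {U : Type*} [NormedAddCommGroup U] (u : ℝ → U) : Prop :=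
  ContinuousOn u (Ici 0) ∧ BddAbove ((fun s => ‖u s‖) '' Ici 0)

/-- The norm `‖u‖_{U_c} = sup_{s ≥ 0} ‖u s‖` on the space of inputs. -/
noncomputable def inputNorm {U : Type*} [NormedAddCommGroup U] (u : ℝ → U) : ℝ :=
  sSup ((fun s => ‖u s‖) '' Ici 0)

/-- For the linear system `ẋ = Ax + f(u)` with mild solutions
`φ(t,x₀,u) = T(t)x₀ + ∫₀ᵗ T(t-r) f(u(r)) dr`, the following are equivalent:
(i) 0-UGASx; (ii) exponential 0-UGASx; (iii) ISS; (iv) exponential ISS. -/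
theorem stmt2 {X U : Type*} [NormedAddCommGroup X] [NormedSpace ℝ X] [CompleteSpace X]
    [NormedAddCommGroup U] [NormedSpace ℝ U]
    (T : ℝ → X →L[ℝ] X)
    (hT0 : T 0 = ContinuousLinearMap.id ℝ X)
    (hTsem : ∀ t ≥ (0:ℝ), ∀ s ≥ (0:ℝ), T (t + s) = (T t).comp (T s))
    (hTcont : ∀ x : X, ContinuousOn (fun t => T t x) (Ici 0))
    (f : U → X) (hf : Continuous f)
    (γ : ℝ → ℝ) (hγ : ClassK γ) (hfb : ∀ v : U, ‖f v‖ ≤ γ ‖v‖)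
    (φ : ℝ → X → (ℝ → U) → X)
    (hφ : ∀ (t : ℝ) (x₀ : X) (u : ℝ → U),
        φ t x₀ u = T t x₀ + ∫ r in (0:ℝ)..t, T (t - r) (f (u r))) :
    List.TFAE [
      (∃ β, ClassKL β ∧ ∀ x₀ : X, ∀ t ≥ (0:ℝ),
          ‖φ t x₀ (fun _ => 0)‖ ≤ β ‖x₀‖ t),
      (∃ M a : ℝ, 0 < M ∧ 0 < a ∧ ∀ x₀ : X, ∀ t ≥ (0:ℝ),
          ‖φ t x₀ (fun _ => 0)‖ ≤ M * Real.exp (-a * t) * ‖x₀‖),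
      (∃ β γ', ClassKL β ∧ ClassK γ' ∧ ∀ x₀ : X, ∀ u : ℝ → U, IsInput u → ∀ t ≥ (0:ℝ),
          ‖φ t x₀ u‖ ≤ β ‖x₀‖ t + γ' (inputNorm u)),
      (∃ M a : ℝ, ∃ γ' : ℝ → ℝ, 0 < M ∧ 0 < a ∧ ClassK γ' ∧
          ∀ x₀ : X, ∀ u : ℝ → U, IsInput u → ∀ t ≥ (0:ℝ),
            ‖φ t x₀ u‖ ≤ M * Real.exp (-a * t) * ‖x₀‖ + γ' (inputNorm u))] := by
  have hf0 : f 0 = 0 := by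
    have h := hfb 0
    rw [norm_zero, hγ.2.2] at h
    exact norm_le_zero_iff.mp h
  have hφ0 : ∀ t x, φ t x (fun _ => 0) = T t x := by
    intro t x
    rw [hφ]
    simp [hf0]
  simp only [hφ0]
  have hin0 : inputNorm (fun _ : ℝ => (0:U)) = 0 := by
    have : ((fun _ : ℝ => ‖(0:U)‖) '' Ici (0:ℝ)) = {0} := by
      rw [norm_zero]
      exact Set.Nonempty.image_const ⟨0, le_refl (0:ℝ)⟩ 0
    unfold inputNorm
    rw [this, csSup_singleton]
  have hisin0 : IsInput (fun _ : ℝ => (0:U)) := by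
    refine ⟨continuousOn_const, ⟨0, ?_⟩⟩
    rintro _ ⟨s, _, rfl⟩
    simp
  tfae_have 1 → 2 := by
    rintro ⟨β, ⟨hβK, hβL⟩, hb⟩
    obtain ⟨_, hanti, htend⟩ := hβL 1 one_pos
    have hscale : ∀ x : X, ∀ t ≥ (0:ℝ), ‖T t x‖ ≤ β 1 t * ‖x‖ := by
      intro x t ht
      by_cases hx : x = 0
      · simp [hx]
      have hn : 0 < ‖x‖ := norm_pos_iff.mpr hx
      have h := hb (‖x‖⁻¹ • x) t ht
      rw [map_smul, norm_smul, norm_smul, norm_inv, norm_norm, inv_mul_cancel₀ hn.ne'] at h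
      rwa [inv_mul_le_iff₀ hn, mul_comm] at h
    have hC : 0 < β 1 0 := by
      have h := (hβK 0 le_rfl).2.1 (le_refl (0:ℝ)) (zero_le_one : (0:ℝ) ≤ 1) zero_lt_one
      have h0 := (hβK 0 le_rfl).2.2
      simp only at h h0
      linarith
    obtain ⟨τ, hτ, hτ1⟩ : ∃ τ : ℝ, β 1 τ < Real.exp (-1) ∧ 0 < τ :=
      ((htend.eventually (gt_mem_nhds (Real.exp_pos (-1)))).and (eventually_gt_atTop 0)).exists
    have hiter : ∀ n : ℕ, ∀ s : ℝ, 0 ≤ s → ∀ x : X,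
        ‖T (n * τ + s) x‖ ≤ β 1 0 * Real.exp (-n) * ‖x‖ := by
      intro n
      induction n with
      | zero =>
        intro s hs x
        have h1 := hscale x s hs
        have h2 : β 1 s ≤ β 1 0 := hanti (le_refl (0:ℝ)) hs hs
        simp only [Nat.cast_zero, zero_mul, zero_add, neg_zero, Real.exp_zero, mul_one]
        exact h1.trans (mul_le_mul_of_nonneg_right h2 (norm_nonneg _))
      | succ n ih =>
        intro s hs x
        have e : ((n + 1 : ℕ) : ℝ) * τ + s = τ + (n * τ + s) := by push_cast; ring
        have hp : 0 ≤ (n:ℝ) * τ + s := by positivity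
        rw [e, hTsem τ hτ1.le _ hp, ContinuousLinearMap.comp_apply]
        calc ‖T τ (T (n * τ + s) x)‖ ≤ β 1 τ * ‖T (n * τ + s) x‖ := hscale _ τ hτ1.le
          _ ≤ Real.exp (-1) * (β 1 0 * Real.exp (-n) * ‖x‖) := by
            exact mul_le_mul hτ.le (ih s hs x) (norm_nonneg _) (Real.exp_pos _).le
          _ = β 1 0 * Real.exp (-((n + 1 : ℕ) : ℝ)) * ‖x‖ := by
            have : -((n + 1 : ℕ) : ℝ) = -1 + -(n:ℝ) := by push_cast; ring
            rw [this, Real.exp_add]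
            ring
    refine ⟨β 1 0 * Real.exp 1, 1 / τ, by positivity, by positivity, ?_⟩
    intro x t ht
    have hfl : (⌊t / τ⌋₊ : ℝ) ≤ t / τ := Nat.floor_le (by positivity)
    have hfl2 : t / τ < ⌊t / τ⌋₊ + 1 := Nat.lt_floor_add_one _
    have hs : 0 ≤ t - ⌊t / τ⌋₊ * τ := by
      rw [le_div_iff₀ hτ1] at hfl
      linarith
    have h := hiter ⌊t / τ⌋₊ _ hs x
    rw [add_sub_cancel] at h
    refine h.trans ?_
    rw [mul_assoc (β 1 0) (Real.exp 1), ← Real.exp_add]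
    gcongr
    have : -(1 / τ) * t = - (t / τ) := by ring
    rw [this]
    linarith
  tfae_have 2 → 4 := by
    rintro ⟨M, a, hM, ha, h⟩
    refine ⟨M, a, fun r => M / a * γ r, hM, ha, ⟨?_, ?_, ?_⟩, ?_⟩
    · exact continuousOn_const.mul hγ.1
    · intro r hr s hs hrs
      exact mul_lt_mul_of_pos_left (hγ.2.1 hr hs hrs) (by positivity)
    · simp [hγ.2.2]
    intro x u hu t ht
    rw [hφ]
    refine (norm_add_le _ _).trans (add_le_add (h x t ht) ?_)
    have hle : ∀ r ≥ (0:ℝ), ‖u r‖ ≤ inputNorm u := fun r hr =>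
      le_csSup hu.2 ⟨r, hr, rfl⟩
    have hN : 0 ≤ inputNorm u := (norm_nonneg _).trans (hle 0 le_rfl)
    set G := γ (inputNorm u) with hG
    have hG0 : 0 ≤ G := by
      rw [← hγ.2.2]
      exact hγ.2.1.monotoneOn (le_refl (0:ℝ)) hN hN
    have hfu : ∀ r ≥ (0:ℝ), ‖f (u r)‖ ≤ G := fun r hr =>
      (hfb _).trans (hγ.2.1.monotoneOn (norm_nonneg _) hN (hle r hr))
    have hcont : Continuous fun r : ℝ => M * Real.exp (-a * (t - r)) * G := by fun_prop
    have h1 : ‖∫ r in (0:ℝ)..t, T (t - r) (f (u r))‖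
        ≤ ∫ r in (0:ℝ)..t, M * Real.exp (-a * (t - r)) * G := by
      refine intervalIntegral.norm_integral_le_of_norm_le ht ?_ (hcont.intervalIntegrable _ _)
      refine Filter.Eventually.of_forall fun r hr => ?_
      refine (h (f (u r)) (t - r) (by linarith [hr.2])).trans ?_
      exact mul_le_mul_of_nonneg_left (hfu r hr.1.le) (by positivity)
    have h2 : ∫ r in (0:ℝ)..t, M * Real.exp (-a * (t - r)) * G
        = M / a * Real.exp (-a * (t - t)) * G - M / a * Real.exp (-a * (t - 0)) * G := by
      refine intervalIntegral.integral_eq_sub_of_hasDerivAt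
        (f := fun r => M / a * Real.exp (-a * (t - r)) * G) (fun r _ => ?_)
        (hcont.intervalIntegrable _ _)
      have hd : HasDerivAt (fun r : ℝ => -a * (t - r)) (-a * (-1)) r :=
        ((hasDerivAt_id r).const_sub t).const_mul (-a)
      have he : M * Real.exp (-a * (t - r)) * G
          = M / a * (Real.exp (-a * (t - r)) * (-a * (-1))) * G := by
        field_simp
      rw [he]
      exact (hd.exp.const_mul (M / a)).mul_const G
    rw [h2] at h1
    refine h1.trans ?_
    have : 0 ≤ M / a * Real.exp (-a * (t - 0)) * G := by positivity
    simp only [sub_self, mul_zero, Real.exp_zero, mul_one]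
    linarith
  tfae_have 4 → 3 := by
    rintro ⟨M, a, γ', hM, ha, hγ', h⟩
    refine ⟨fun r t => M * Real.exp (-a * t) * r, γ', ⟨fun t _ => ⟨?_, ?_, ?_⟩, fun r hr =>
      ⟨?_, ?_, ?_⟩⟩, hγ', h⟩
    · fun_prop
    · intro r _ s _ hrs
      exact mul_lt_mul_of_pos_left hrs (by positivity)
    · simp
    · fun_prop
    · intro s _ t _ hst
      have : -a * t ≤ -a * s := by nlinarith
      have := Real.exp_le_exp.mpr this
      change M * Real.exp (-a * t) * r ≤ M * Real.exp (-a * s) * r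
      gcongr
    · have h1 : Tendsto (fun t : ℝ => -a * t) atTop atBot :=
        tendsto_id.const_mul_atTop_of_neg (by linarith)
      have h2 := ((Real.tendsto_exp_atBot.comp h1).const_mul M).mul_const r
      simpa using h2
  tfae_have 3 → 1 := by
    rintro ⟨β, γ', hβ, hγ', h⟩
    refine ⟨β, hβ, fun x t ht => ?_⟩
    have := h x _ hisin0 t ht
    rwa [hin0, hγ'.2.2, add_zero, hφ0] at this
  tfae_finish
end

section
/- Let C₀(ℝ) denote the Banach space of continuous functions f : ℝ → ℝ vanishing at infinity, with the supremum norm, and for t ≥ 0 define T_q(t) by (T_q(t)f)(s) = e^{−t/(1+|s|)} f(s). Then: (a) for every f ∈ C₀(ℝ) and every t ≥ 0, the function T_q(t)f again belongs to C₀(ℝ) and ‖T_q(t)f‖_∞ ≤ ‖f‖_∞; (b) for every f ∈ C₀(ℝ), ‖T_q(t)f‖_∞ → 0 as t → ∞. In particular, the system ẋ = A_q x generated by this multiplication semigroup is globally asymptotically stable at zero (0-GAS): it is Lyapunov stable at 0 and every trajectory T_q(t)f converges to 0. -/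
open Filter Set

theorem stmt4_abs_le (f : ZeroAtInftyContinuousMap ℝ ℝ) (s : ℝ) : |f s| ≤ ‖f‖ := by
  rw [← ZeroAtInftyContinuousMap.norm_toBCF_eq_norm]
  exact f.toBCF.norm_coe_le_norm s

theorem stmt4_contr (f : ZeroAtInftyContinuousMap ℝ ℝ) (t : ℝ) (ht : 0 ≤ t) (s : ℝ) :
    |Real.exp (-t / (1 + |s|)) * f s| ≤ |f s| := by
  rw [abs_mul, Real.abs_exp]
  have h : Real.exp (-t / (1 + |s|)) ≤ 1 := by
    rw [Real.exp_le_one_iff]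
    exact div_nonpos_of_nonpos_of_nonneg (by linarith) (by positivity)
  exact mul_le_of_le_one_left (abs_nonneg _) h

/-- The multiplication semigroup `T_q(t)` with `q(s) = -1/(1+|s|)` on `C₀(ℝ)`:
(a) it maps `C₀(ℝ)` into itself without increasing the sup-norm (Lyapunov stability at `0`);
(b) every trajectory tends to `0` in the sup-norm, i.e. the system `ẋ = A_q x` is 0-GAS. -/
theorem stmt4 (f : ZeroAtInftyContinuousMap ℝ ℝ) :
    (∀ t ≥ (0:ℝ), ∃ g : ZeroAtInftyContinuousMap ℝ ℝ,
        (∀ s : ℝ, g s = Real.exp (-t / (1 + |s|)) * f s) ∧ ‖g‖ ≤ ‖f‖) ∧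
    Tendsto (fun t : ℝ => ⨆ s : ℝ, |Real.exp (-t / (1 + |s|)) * f s|) atTop (nhds 0) ∧
    (∀ ε > (0:ℝ), ∃ δ > (0:ℝ), ∀ f' : ZeroAtInftyContinuousMap ℝ ℝ, ‖f'‖ < δ →
        ∀ t ≥ (0:ℝ), ∀ s : ℝ, |Real.exp (-t / (1 + |s|)) * f' s| < ε) := by
  refine ⟨?_, ?_, ?_⟩
  · intro t ht
    have hc : Continuous (fun s : ℝ => Real.exp (-t / (1 + |s|)) * f s) := by
      have hf : Continuous (fun s : ℝ => f s) := map_continuous f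
      have h1 : ∀ s : ℝ, 1 + |s| ≠ 0 := fun s => by positivity
      exact (Real.continuous_exp.comp
        (continuous_const.div (continuous_const.add continuous_abs) h1)).mul hf
    have hz : Tendsto (fun s : ℝ => Real.exp (-t / (1 + |s|)) * f s) (cocompact ℝ) (nhds 0) := by
      apply squeeze_zero_norm (a := fun s => |f s|) (fun s => stmt4_contr f t ht s)
      simpa using (zero_at_infty f).abs
    refine ⟨⟨⟨_, hc⟩, hz⟩, fun s => rfl, ?_⟩
    rw [← ZeroAtInftyContinuousMap.norm_toBCF_eq_norm]
    refine (BoundedContinuousFunction.norm_le (norm_nonneg f)).2 fun s => ?_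
    exact (stmt4_contr f t ht s).trans (stmt4_abs_le f s)
  · rw [Metric.tendsto_nhds]
    intro ε hε
    have hz : ∀ᶠ s in cocompact ℝ, |f s| < ε / 2 := by
      have h := (Metric.tendsto_nhds.1 (zero_at_infty f)) (ε / 2) (by positivity)
      simpa [Real.dist_eq] using h
    obtain ⟨K, hK, hKs⟩ := mem_cocompact.1 hz
    obtain ⟨R, hR⟩ := hK.isBounded.exists_norm_le
    have hR0 : 0 < 1 + |R| := by positivity
    have hlim : Tendsto (fun t : ℝ => Real.exp (-t / (1 + |R|)) * ‖f‖) atTop (nhds 0) := by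
      have h1 : Tendsto (fun t : ℝ => -(t / (1 + |R|))) atTop atBot :=
        tendsto_neg_atTop_atBot.comp (tendsto_id.atTop_div_const hR0)
      have h2 := (Real.tendsto_exp_atBot.comp h1).mul_const ‖f‖
      simpa [Function.comp_def, neg_div] using h2
    filter_upwards [hlim.eventually_lt_const (half_pos hε), eventually_ge_atTop (0:ℝ)] with t h1 ht
    have hle : (⨆ s : ℝ, |Real.exp (-t / (1 + |s|)) * f s|) ≤ ε / 2 := by
      refine ciSup_le fun s => ?_
      by_cases hs : s ∈ K
      · refine le_trans ?_ h1.le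
        rw [abs_mul, Real.abs_exp]
        refine mul_le_mul ?_ (stmt4_abs_le f s) (abs_nonneg _) (Real.exp_pos _).le
        rw [Real.exp_le_exp, neg_div, neg_div, neg_le_neg_iff]
        have h3 : |s| ≤ |R| := (hR s hs).trans (le_abs_self R)
        exact div_le_div_of_nonneg_left ht (by positivity) (by linarith)
      · have h4 : |f s| < ε / 2 := hKs hs
        exact (stmt4_contr f t ht s).trans h4.le
    have hnn : 0 ≤ (⨆ s : ℝ, |Real.exp (-t / (1 + |s|)) * f s|) :=
      Real.iSup_nonneg fun s => abs_nonneg _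
    rw [Real.dist_eq, sub_zero, abs_of_nonneg hnn]
    linarith
  · intro ε hε
    refine ⟨ε, hε, fun g hg t ht s => ?_⟩
    exact ((stmt4_contr g t ht s).trans (stmt4_abs_le g s)).trans_lt hg
end

section
/- Let a > 0. For every t > 1 one has sup_{s∈ℝ} a·√(1+|s|)·(1 − e^{−t/(1+|s|)}) ≥ a·√t·(1 − e^{−1}). Consequently, for every x₀ in the space C₀(ℝ) of continuous functions vanishing at infinity, the family of functions x(t) : ℝ → ℝ defined by x(t)(s) = e^{−t/(1+|s|)} x₀(s) + a·√(1+|s|)·(1 − e^{−t/(1+|s|)}) satisfies sup_{s∈ℝ} |x(t)(s)| → ∞ as t → ∞. (Here x(t) is the mild solution of ẋ = A_q x + u with the multiplication semigroup (T_q(t)f)(s) = e^{−t/(1+|s|)}f(s) and the constant-in-time input u(s) = a/√(1+|s|), which has ‖u‖_∞ = a; hence a 0-GAS infinite-dimensional linear system can have trajectories that grow unboundedly under arbitrarily small bounded inputs.) -/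
open Filter Set

/-- The forced response is bounded in `s`. -/
lemma stmt5_aux (a : ℝ) (ha : 0 < a) (t : ℝ) (ht : 0 < t) (s : ℝ) :
    0 ≤ a * Real.sqrt (1 + |s|) * (1 - Real.exp (-t / (1 + |s|))) ∧
    a * Real.sqrt (1 + |s|) * (1 - Real.exp (-t / (1 + |s|))) ≤ a * t := by
  have hs := abs_nonneg s
  have hr : 0 < 1 + |s| := by linarith
  have h1 : 1 - Real.exp (-t / (1 + |s|)) ≤ t / (1 + |s|) := by
    have := Real.add_one_le_exp (-t / (1 + |s|))
    rw [neg_div] at this ⊢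
    linarith
  have h0 : 0 ≤ 1 - Real.exp (-t / (1 + |s|)) := by
    have : Real.exp (-t / (1 + |s|)) ≤ 1 := by
      rw [Real.exp_le_one_iff, neg_div]
      have := div_pos ht hr
      linarith
    linarith
  refine ⟨by positivity, ?_⟩
  have h2 : Real.sqrt (1 + |s|) ≤ 1 + |s| := by
    rw [Real.sqrt_le_left hr.le]
    nlinarith
  calc a * Real.sqrt (1 + |s|) * (1 - Real.exp (-t / (1 + |s|)))
      ≤ a * (1 + |s|) * (t / (1 + |s|)) := by gcongr
    _ = a * t := by field_simp

/-- For the 0-GAS multiplication semigroup `(T_q(t)f)(s) = e^{-t/(1+|s|)} f(s)` on `C₀(ℝ)` and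
the constant-in-time input `u(s) = a/√(1+|s|)` (with `‖u‖_∞ = a` arbitrarily small), the mild
solution `x(t)(s) = e^{-t/(1+|s|)} x₀(s) + a √(1+|s|) (1 - e^{-t/(1+|s|)})` grows unboundedly:
its sup-norm is bounded below by `a √t (1 - e^{-1})` for `t > 1` and tends to `∞`. -/
theorem stmt5 (a : ℝ) (ha : 0 < a) :
    (∀ t : ℝ, 1 < t →
      a * Real.sqrt t * (1 - Real.exp (-1)) ≤
        ⨆ s : ℝ, a * Real.sqrt (1 + |s|) * (1 - Real.exp (-t / (1 + |s|)))) ∧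
    ∀ x₀ : ZeroAtInftyContinuousMap ℝ ℝ,
      Tendsto (fun t : ℝ => ⨆ s : ℝ,
          |Real.exp (-t / (1 + |s|)) * x₀ s +
            a * Real.sqrt (1 + |s|) * (1 - Real.exp (-t / (1 + |s|)))|)
        atTop atTop := by
  have key : ∀ t : ℝ, 1 < t → 1 + |t - 1| = t ∧ -t / t = -1 := by
    intro t ht
    refine ⟨by rw [abs_of_pos (by linarith)]; ring, ?_⟩
    have : t ≠ 0 := by linarith
    field_simp
  constructor
  · intro t ht
    obtain ⟨k1, k2⟩ := key t ht
    have hb : BddAbove (range fun s : ℝ =>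
        a * Real.sqrt (1 + |s|) * (1 - Real.exp (-t / (1 + |s|)))) := by
      refine ⟨a * t, ?_⟩
      rintro _ ⟨s, rfl⟩
      exact (stmt5_aux a ha t (by linarith) s).2
    have := le_ciSup hb (t - 1)
    simp only [k1, k2] at this
    exact this
  · intro x₀
    obtain ⟨C, hC⟩ : ∃ C : ℝ, ∀ s, |x₀ s| ≤ C :=
      ⟨‖x₀.toBCF‖, fun s => x₀.toBCF.norm_coe_le_norm s⟩
    have hE : ∀ t : ℝ, 0 < t → ∀ s : ℝ, |Real.exp (-t / (1 + |s|)) * x₀ s| ≤ C := by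
      intro t ht s
      have hr : 0 < 1 + |s| := by positivity
      rw [abs_mul, abs_of_pos (Real.exp_pos _)]
      have : Real.exp (-t / (1 + |s|)) ≤ 1 := by
        rw [Real.exp_le_one_iff, neg_div]
        have := div_pos ht hr
        linarith
      have h3 := mul_le_mul_of_nonneg_right this (abs_nonneg (x₀ s))
      linarith [hC s]
    have hc : 0 < 1 - Real.exp (-1) := by
      have : Real.exp (-1) < 1 := by
        rw [Real.exp_lt_one_iff]; norm_num
      linarith
    have hlim : Tendsto (fun t : ℝ => a * Real.sqrt t * (1 - Real.exp (-1)) + -C)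
        atTop atTop :=
      tendsto_atTop_add_const_right _ _
        ((Real.tendsto_sqrt_atTop.const_mul_atTop ha).atTop_mul_const hc)
    refine tendsto_atTop_mono' _ ?_ hlim
    filter_upwards [eventually_gt_atTop 1] with t ht
    obtain ⟨k1, k2⟩ := key t ht
    have ht0 : 0 < t := by linarith
    have hb : BddAbove (range fun s : ℝ => |Real.exp (-t / (1 + |s|)) * x₀ s +
        a * Real.sqrt (1 + |s|) * (1 - Real.exp (-t / (1 + |s|)))|) := by
      refine ⟨C + a * t, ?_⟩
      rintro _ ⟨s, rfl⟩
      have h := stmt5_aux a ha t ht0 s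
      refine (abs_add_le _ _).trans (add_le_add (hE t ht0 s) ?_)
      rw [abs_of_nonneg h.1]
      exact h.2
    refine le_trans ?_ (le_ciSup hb (t - 1))
    have h4 := neg_le_of_abs_le (hE t ht0 (t - 1))
    simp only [k1, k2] at h4 ⊢
    refine le_trans ?_ (le_abs_self _)
    linarith
end

section
/- Let X and U be normed linear spaces and let U_c be the space of bounded continuous functions u : [0,∞) → U with norm ‖u‖_{U_c} = sup_{s≥0}‖u(s)‖_U; for r ≥ 0 let S_r u denote the shifted input (S_r u)(τ) = u(τ + r), so that S_r u ∈ U_c and ‖S_r u‖_{U_c} ≤ ‖u‖_{U_c}. Let φ : [0,∞) × X × U_c → X satisfy: φ(0,x,u) = x for all x, u; t ↦ φ(t,x,u) is continuous for each x, u; the cocycle property φ(t+r, x, u) = φ(t, φ(r,x,u), S_r u) for all t, r ≥ 0; and φ(t,0,0) = 0 for all t ≥ 0 (x = 0 is an equilibrium). Suppose there exist a continuous function V : X → [0,∞), functions ψ₁, ψ₂ of class K∞, χ of class K, and a continuous positive definite function α : [0,∞) → [0,∞) (α(0) = 0, α(r) > 0 for r > 0) such that ψ₁(‖x‖_X) ≤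 V(x) ≤ ψ₂(‖x‖_X) for all x ∈ X, and for all x ∈ X and all u ∈ U_c the implication holds: ‖x‖_X ≥ χ(‖u‖_{U_c}) ⟹ limsup_{t→0⁺} (V(φ(t,x,u)) − V(x))/t ≤ −α(‖x‖_X). Then the system is input-to-state stable: there exist β of class KL and γ of class K such that ‖φ(t,x,u)‖_X ≤ β(‖x‖_X, t) + γ(‖u‖_{U_c}) for all x ∈ X, all u ∈ U_c and all t ≥ 0. -/
open Filter Set

/-- A function of class `K∞`: class `K` and unbounded. -/
def ClassKinf (γ : ℝ → ℝ) : Prop :=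
  ClassK γ ∧ ∀ M : ℝ, ∃ r ≥ (0:ℝ), M < γ r

/-- A continuous positive definite function on `[0,∞)`. -/
def PosDef (α : ℝ → ℝ) : Prop :=
  ContinuousOn α (Ici 0) ∧ α 0 = 0 ∧ ∀ r > (0:ℝ), 0 < α r

theorem ClassK.comp {f g : ℝ → ℝ} (hf : ClassK f) (hg : ClassK g) :
    ClassK (fun r => f (g r)) := by
  have hm : MapsTo g (Ici 0) (Ici 0) := fun r hr => by
    have := hg.2.1.monotoneOn self_mem_Ici hr hr
    rw [hg.2.2] at this
    exact this
  refine ⟨hf.1.comp hg.1 hm, fun a ha b hb hab => hf.2.1 (hm ha) (hm hb) (hg.2.1 ha hb hab), ?_⟩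
  simp [hg.2.2, hf.2.2]

theorem ClassK.nonneg {f : ℝ → ℝ} (hf : ClassK f) {r : ℝ} (hr : 0 ≤ r) : 0 ≤ f r := by
  have := hf.2.1.monotoneOn self_mem_Ici (show r ∈ Ici 0 from hr) hr
  rwa [hf.2.2] at this

theorem ClassKinf.exists_inv {f : ℝ → ℝ} (hf : ClassKinf f) :
    ∃ g, ClassK g ∧ ∀ r, 0 ≤ r → g (f r) = r := by
  obtain ⟨hK, hu⟩ := hf
  have himg : f '' Ici 0 = Ici 0 := by
    apply Subset.antisymm
    · rintro _ ⟨r, hr, rfl⟩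
      exact hK.nonneg hr
    · intro y hy
      obtain ⟨r, hr, hyr⟩ := hu y
      have := intermediate_value_Icc hr (hK.1.mono Icc_subset_Ici_self)
      obtain ⟨s, hs, rfl⟩ := this ⟨by rw [hK.2.2]; exact hy, hyr.le⟩
      exact ⟨s, hs.1, rfl⟩
  let F : Ici (0:ℝ) → Ici (0:ℝ) := fun r => ⟨f r, hK.nonneg r.2⟩
  have hF : StrictMono F := fun a b hab => hK.2.1 a.2 b.2 hab
  have hFs : Function.Surjective F := by
    rintro ⟨y, hy⟩
    rw [← himg] at hy
    obtain ⟨r, hr, rfl⟩ := hy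
    exact ⟨⟨r, hr⟩, rfl⟩
  let e := StrictMono.orderIsoOfSurjective F hF hFs
  have he : ∀ r : Ici (0:ℝ), e.symm (F r) = r := fun r => e.symm_apply_apply r
  have hinv : ∀ r, 0 ≤ r → ((e.symm (projIci 0 (f r)) : Ici (0:ℝ)) : ℝ) = r := by
    intro r hr
    rw [projIci_of_mem (show f r ∈ Ici 0 from hK.nonneg hr)]
    exact congrArg Subtype.val (he ⟨r, hr⟩)
  refine ⟨fun y => (e.symm (projIci 0 y) : Ici (0:ℝ)), ⟨?_, ?_, ?_⟩, hinv⟩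
  · have hp : Continuous (projIci (0:ℝ)) :=
      Continuous.subtype_mk (continuous_const.max continuous_id) _
    exact (continuous_subtype_val.comp (e.symm.continuous.comp hp)).continuousOn
  · intro a ha b hb hab
    exact e.symm.strictMono (strictMonoOn_projIci ha hb hab)
  · have := hinv 0 le_rfl
    rwa [hK.2.2] at this

/-- Continuous rate function in logarithmic coordinates. -/
theorem exists_rate {ψ₁ ψ₂ α : ℝ → ℝ} (hψ₁ : ClassKinf ψ₁) (hψ₂ : ClassKinf ψ₂)
    (hα : PosDef α) :
    ∃ k : ℝ → ℝ, Continuous k ∧ ∀ p, 0 < k p ∧ k p ≤ 1 ∧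
      ∀ s, 0 ≤ s → ψ₁ s ≤ Real.exp p → Real.exp p ≤ ψ₂ s → k p * Real.exp p < α s := by
  let T : ℝ → Set ℝ := fun p => {w | 0 < w ∧ w ≤ 1 ∧
      ∀ s, 0 ≤ s → ψ₁ s ≤ Real.exp p → Real.exp p ≤ ψ₂ s → w * Real.exp p < α s}
  have hconv : ∀ p, Convex ℝ (T p) := by
    intro p
    apply OrdConnected.convex
    refine ⟨fun a ha b hb c hc => ⟨ha.1.trans_le hc.1, hc.2.trans hb.2.1, ?_⟩⟩
    intro s h1 h2 h3
    exact (mul_le_mul_of_nonneg_right hc.2 (Real.exp_pos p).le).trans_lt (hb.2.2 s h1 h2 h3)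
  have hloc : ∀ p : ℝ, ∃ c : ℝ, ∀ᶠ q in nhds p, c ∈ T q := by
    intro p
    obtain ⟨R, hR0, hR⟩ := hψ₁.2 (Real.exp (p+1))
    let S : Set ℝ := Icc 0 R ∩ {s | Real.exp (p-1) ≤ ψ₂ s}
    have hScl : IsClosed S :=
      (hψ₂.1.1.mono (Icc_subset_Ici_self : Icc 0 R ⊆ Ici 0)).preimage_isClosed_of_isClosed
        isClosed_Icc isClosed_Ici
    have hSc : IsCompact S := isCompact_Icc.of_isClosed_subset hScl inter_subset_left
    have hSpos : ∀ s ∈ S, 0 < α s := by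
      intro s hs
      apply hα.2.2
      rcases hs.1.1.lt_or_eq with h | h
      · exact h
      · have h2 : Real.exp (p-1) ≤ ψ₂ s := hs.2
        rw [← h, hψ₂.1.2.2] at h2
        exact absurd (Real.exp_pos (p-1)) (not_lt.2 h2)
    have hSα : ContinuousOn α S := hα.1.mono fun s hs => hs.1.1
    obtain ⟨d, hd, hdS⟩ : ∃ d > 0, ∀ s ∈ S, d ≤ α s := by
      rcases S.eq_empty_or_nonempty with h | h
      · exact ⟨1, one_pos, by simp [h]⟩
      · obtain ⟨s, hs, hm⟩ := hSc.exists_isMinOn h hSα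
        exact ⟨α s, hSpos s hs, fun t ht => hm ht⟩
    refine ⟨min 1 (d / (2 * Real.exp (p+1))), ?_⟩
    filter_upwards [Ioo_mem_nhds (show p - 1 < p by linarith) (show p < p + 1 by linarith)]
      with q hq
    have hE := Real.exp_pos (p+1)
    have hq2 := Real.exp_lt_exp.2 hq.2
    have hq1 := Real.exp_lt_exp.2 hq.1
    refine ⟨lt_min one_pos (by positivity), min_le_left _ _, ?_⟩
    intro s h0 h1 h2
    have hsR : s ≤ R := by
      by_contra hcon
      have := hψ₁.1.2.1 hR0 h0 (not_le.1 hcon)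
      linarith
    have hd' := hdS s ⟨⟨h0, hsR⟩, (hq1.le.trans h2 : _ ≤ _)⟩
    calc min 1 (d / (2 * Real.exp (p+1))) * Real.exp q
        ≤ (d / (2 * Real.exp (p+1))) * Real.exp (p+1) := by
          apply mul_le_mul (min_le_right _ _) hq2.le (Real.exp_pos _).le (by positivity)
      _ = d / 2 := by field_simp
      _ < d := by linarith
      _ ≤ α s := hd'
  obtain ⟨g, hg⟩ := exists_continuous_forall_mem_convex_of_local_const hconv hloc
  exact ⟨g, g.continuous, hg⟩

theorem exists_H {k : ℝ → ℝ} (hk : Continuous k) (hk0 : ∀ p, 0 < k p) (hk1 : ∀ p, k p ≤ 1) :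
    ∃ H : ℝ → ℝ, (∀ p, HasDerivAt H (k p)⁻¹ p) ∧ H 0 = 0 ∧ Monotone (fun p => H p - p) := by
  have hc : Continuous (fun p => (k p)⁻¹) := hk.inv₀ fun p => (hk0 p).ne'
  have hd : ∀ p, HasDerivAt (fun p => ∫ q in (0:ℝ)..p, (k q)⁻¹) (k p)⁻¹ p := fun p =>
    (hc.integral_hasStrictDerivAt 0 p).hasDerivAt
  refine ⟨fun p => ∫ q in (0:ℝ)..p, (k q)⁻¹, hd, by simp, ?_⟩
  have hd2 : ∀ p, HasDerivAt (fun p => (∫ q in (0:ℝ)..p, (k q)⁻¹) - p) ((k p)⁻¹ - 1) p :=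
    fun p => (hd p).sub (hasDerivAt_id p)
  apply monotone_of_deriv_nonneg (fun p => (hd2 p).differentiableAt)
  intro p
  rw [(hd2 p).deriv]
  have := (one_le_inv₀ (hk0 p)).2 (hk1 p)
  linarith

theorem exists_W {H : ℝ → ℝ} (hc : Continuous H) (h0 : H 0 = 0)
    (hm : Monotone (fun p => H p - p)) :
    ∃ W : ℝ → ℝ, ClassKinf W ∧ ∀ v, 0 < v → W v = Real.exp (H (Real.log v)) := by
  have hH : StrictMono H := fun a b hab => by
    have := hm hab.le
    linarith
  let W : ℝ → ℝ := fun v => if v ≤ 0 then 0 else Real.exp (H (Real.log v))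
  have hW : ∀ v, 0 < v → W v = Real.exp (H (Real.log v)) := fun v hv => by
    simp [W, not_le.2 hv]
  have hW0 : W 0 = 0 := by simp [W]
  have hWnn : ∀ v, 0 ≤ W v := fun v => by
    by_cases h : v ≤ 0
    · simp [W, h]
    · rw [hW v (not_le.1 h)]; positivity
  refine ⟨W, ⟨⟨?_, ?_, hW0⟩, ?_⟩, hW⟩
  · intro v hv
    rcases (show (0:ℝ) ≤ v from hv).lt_or_eq with h | h
    · have h1 : ContinuousAt (fun v => Real.exp (H (Real.log v))) v :=
        Real.continuous_exp.continuousAt.comp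
          (hc.continuousAt.comp (Real.continuousAt_log h.ne'))
      refine (h1.congr ?_).continuousWithinAt
      filter_upwards [Ioi_mem_nhds h] with w hw using (hW w hw).symm
    · subst h
      unfold ContinuousWithinAt
      rw [hW0]
      have hid : Tendsto (fun v : ℝ => v) (nhdsWithin 0 (Ici 0)) (nhds 0) :=
        tendsto_id.mono_left nhdsWithin_le_nhds
      refine tendsto_of_tendsto_of_tendsto_of_le_of_le' tendsto_const_nhds hid
        (Eventually.of_forall hWnn) ?_
      have h1 : ∀ᶠ w : ℝ in nhdsWithin 0 (Ici 0), w < 1 :=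
        nhdsWithin_le_nhds (Iio_mem_nhds one_pos)
      filter_upwards [h1, self_mem_nhdsWithin] with w hw1 hw0
      rcases (show (0:ℝ) ≤ w from hw0).lt_or_eq with h | h
      · rw [hW w h]
        have hl : Real.log w ≤ 0 := Real.log_nonpos h.le hw1.le
        have := hm hl
        simp only [h0] at this
        calc Real.exp (H (Real.log w)) ≤ Real.exp (Real.log w) :=
              Real.exp_le_exp.2 (by linarith)
          _ = w := Real.exp_log h
      · rw [← h, hW0]
  · intro a ha b hb hab
    have hb0 : 0 < b := lt_of_le_of_lt ha hab
    rw [hW b hb0]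
    rcases (show (0:ℝ) ≤ a from ha).lt_or_eq with h | h
    · rw [hW a h]
      exact Real.exp_lt_exp.2 (hH (Real.log_lt_log h hab))
    · rw [← h, hW0]; positivity
  · intro M
    have hpos : (0:ℝ) < max 1 (M+1) := lt_max_of_lt_left one_pos
    refine ⟨max 1 (M+1), hpos.le, ?_⟩
    rw [hW _ hpos]
    have hl : 0 ≤ Real.log (max 1 (M+1)) := Real.log_nonneg (le_max_left _ _)
    have := hm hl
    simp only [h0] at this
    calc M < M + 1 := by linarith
      _ ≤ max 1 (M+1) := le_max_right _ _
      _ = Real.exp (Real.log (max 1 (M+1))) := (Real.exp_log hpos).symm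
      _ ≤ _ := Real.exp_le_exp.2 (by linarith)

/-- Comparison principle. -/
theorem decay_lemma {k H y : ℝ → ℝ} (hk0 : ∀ p, 0 < k p)
    (hH : ∀ p, HasDerivAt H (k p)⁻¹ p) (hHm : StrictMono H) {a b : ℝ} (hab : a ≤ b)
    (hy : ContinuousOn y (Icc a b)) (hpos : ∀ t ∈ Icc a b, 0 < y t)
    (hs : ∀ t ∈ Ico a b, ∀ᶠ z in nhdsWithin t (Ioi t),
      y z ≤ y t - k (Real.log (y t)) * y t * (z - t)) :
    H (Real.log (y b)) ≤ H (Real.log (y a)) - (b - a) := by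
  have hHc : Continuous H := continuous_iff_continuousAt.2 fun p => (hH p).continuousAt
  have hfc : ContinuousOn (fun t => H (Real.log (y t))) (Icc a b) :=
    hHc.comp_continuousOn (hy.log fun t ht => (hpos t ht).ne')
  have key := image_le_of_liminf_slope_right_le_deriv_boundary
    (f := fun t => H (Real.log (y t))) (a := a) (b := b) hfc
    (B := fun t => H (Real.log (y a)) - (t - a)) (B' := fun _ => -1) (by simp)
    (by fun_prop)
    (fun x _ => by
      have := ((hasDerivAt_id x).sub_const a).const_sub (H (Real.log (y a)))
      exact this.hasDerivWithinAt)
    ?_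
  · exact key ⟨hab, le_rfl⟩
  intro x hx r hr
  have hyx := hpos x ⟨hx.1, hx.2.le⟩
  set q := k (Real.log (y x)) * y x with hq
  have hd : HasDerivAt (fun z => H (Real.log (y x - q * (z - x)))) (-1) x := by
    have h1 : HasDerivAt (fun z => y x - q * (z - x)) (-(q * 1)) x :=
      (((hasDerivAt_id x).sub_const x).const_mul q).const_sub (y x)
    have h2 := h1.log (by simpa using hyx.ne')
    have h3 := HasDerivAt.comp x (hH (Real.log (y x - q * (x - x)))) h2
    refine HasDerivAt.congr_deriv (f := fun z => H (Real.log (y x - q * (z - x)))) h3 ?_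
    simp only [sub_self, mul_zero, sub_zero, hq]
    have := (hk0 (Real.log (y x))).ne'
    field_simp
  have hsl := (hasDerivAt_iff_tendsto_slope.1 hd).mono_left
    (nhdsWithin_mono x (show Ioi x ⊆ {x}ᶜ from fun z hz => ne_of_gt hz))
  have hev := hsl.eventually (gt_mem_nhds hr)
  apply Eventually.frequently
  filter_upwards [hev, hs x hx, Ioo_mem_nhdsGT hx.2] with z hz1 hz2 hz3
  refine lt_of_le_of_lt ?_ hz1
  have hyz := hpos z ⟨hx.1.trans hz3.1.le, hz3.2.le⟩
  have hle : H (Real.log (y z)) ≤ H (Real.log (y x - q * (z - x))) :=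
    hHm.monotone (Real.log_le_log hyz hz2)
  rw [slope_def_field, slope_def_field]
  simp only [sub_self, mul_zero, sub_zero]
  have : 0 < z - x := by linarith [hz3.1]
  gcongr

/-- A genuine bound from a negative real `limsup`. -/
theorem eventually_of_limsup_neg {f : ℝ → ℝ} {l : Filter ℝ} {c q : ℝ} (hc : 0 < c)
    (h : limsup f l ≤ -c) (hq : q < c) : ∀ᶠ t in l, f t < -q := by
  refine eventually_lt_of_limsup_lt (lt_of_le_of_lt h (neg_lt_neg hq)) ?_
  by_contra hb
  have : limsup f l = 0 := by
    rw [limsup_eq]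
    have he : {a | ∀ᶠ n in l, f n ≤ a} = ∅ := by
      ext a
      simp only [mem_ofPred_eq, mem_empty_iff_false, iff_false]
      exact fun ha => hb ⟨a, ha⟩
    rw [he, Real.sInf_empty]
  linarith

/-- If the control system `φ` (with bounded continuous inputs, identity, continuity and cocycle
properties, and equilibrium at `0`) possesses an ISS-Lyapunov function `V`, then it is ISS. -/
theorem stmt6 {X U : Type*} [NormedAddCommGroup X] [NormedSpace ℝ X]
    [NormedAddCommGroup U] [NormedSpace ℝ U]
    (φ : ℝ → X → (ℝ → U) → X)
    (hid : ∀ (x : X) (u : ℝ → U), IsInput u → φ 0 x u = x)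
    (hcont : ∀ (x : X) (u : ℝ → U), IsInput u → ContinuousOn (fun t => φ t x u) (Ici 0))
    (hcoc : ∀ t ≥ (0:ℝ), ∀ r ≥ (0:ℝ), ∀ (x : X) (u : ℝ → U), IsInput u →
        φ (t + r) x u = φ t (φ r x u) (fun τ => u (τ + r)))
    (heq : ∀ t ≥ (0:ℝ), φ t 0 (fun _ => 0) = 0)
    (V : X → ℝ) (hVc : Continuous V) (hVnn : ∀ x : X, 0 ≤ V x)
    (ψ₁ ψ₂ : ℝ → ℝ) (hψ₁ : ClassKinf ψ₁) (hψ₂ : ClassKinf ψ₂)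
    (χ : ℝ → ℝ) (hχ : ClassK χ)
    (α : ℝ → ℝ) (hα : PosDef α)
    (hsandwich : ∀ x : X, ψ₁ ‖x‖ ≤ V x ∧ V x ≤ ψ₂ ‖x‖)
    (hdiss : ∀ (x : X) (u : ℝ → U), IsInput u → χ (inputNorm u) ≤ ‖x‖ →
        limsup (fun t => (V (φ t x u) - V x) / t) (nhdsWithin 0 (Ioi 0)) ≤ -α ‖x‖) :
    ∃ β γ, ClassKL β ∧ ClassK γ ∧
      ∀ (x : X) (u : ℝ → U), IsInput u → ∀ t ≥ (0:ℝ),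
        ‖φ t x u‖ ≤ β ‖x‖ t + γ (inputNorm u) := by
  obtain ⟨k, hkc, hk⟩ := exists_rate hψ₁ hψ₂ hα
  have hk0 := fun p => (hk p).1
  obtain ⟨H, hHd, hH0, hHm⟩ := exists_H hkc hk0 fun p => (hk p).2.1
  have hHs : StrictMono H := fun a b hab => by
    have := hHm hab.le
    simp only at this
    linarith
  have hHc : Continuous H := continuous_iff_continuousAt.2 fun p => (hHd p).continuousAt
  obtain ⟨W, hWK, hW⟩ := exists_W hHc hH0 hHm
  obtain ⟨gW, hgW, hgWi⟩ := hWK.exists_inv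
  obtain ⟨g1, hg1, hg1i⟩ := hψ₁.exists_inv
  have hκ : ClassK (fun r => g1 (gW r)) := hg1.comp hgW
  have hη : ClassK (fun r => W (ψ₂ r)) := hWK.1.comp hψ₂.1
  refine ⟨fun r t => g1 (gW (Real.exp (-t) * W (ψ₂ r))), fun s => g1 (ψ₂ (χ s)),
    ⟨?_, ?_⟩, hg1.comp (hψ₂.1.comp hχ), ?_⟩
  · intro t _
    have hmul : ClassK (fun r => Real.exp (-t) * r) :=
      ⟨by fun_prop, fun a _ b _ hab => mul_lt_mul_of_pos_left hab (Real.exp_pos _), by simp⟩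
    exact hκ.comp (hmul.comp hη)
  · intro r hr
    have hηr : 0 ≤ W (ψ₂ r) := hη.nonneg hr.le
    have hmem : ∀ t : ℝ, Real.exp (-t) * W (ψ₂ r) ∈ Ici (0:ℝ) :=
      fun t => mul_nonneg (Real.exp_pos _).le hηr
    refine ⟨?_, ?_, ?_⟩
    · exact hκ.1.comp (f := fun t : ℝ => Real.exp (-t) * W (ψ₂ r)) (by fun_prop)
        fun t _ => hmem t
    · intro s _ t _ hst
      refine hκ.2.1.monotoneOn (hmem t) (hmem s) ?_
      exact mul_le_mul_of_nonneg_right (Real.exp_le_exp.2 (by linarith)) hηr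
    · have h0 : Tendsto (fun t : ℝ => Real.exp (-t) * W (ψ₂ r)) atTop (nhds 0) := by
        have := (Real.tendsto_exp_neg_atTop_nhds_zero).mul_const (W (ψ₂ r))
        simpa using this
      have h1 : Tendsto (fun t : ℝ => Real.exp (-t) * W (ψ₂ r)) atTop
          (nhdsWithin 0 (Ici 0)) :=
        tendsto_nhdsWithin_iff.2 ⟨h0, Eventually.of_forall hmem⟩
      have h2 := (hκ.1 0 self_mem_Ici).tendsto.comp h1
      rw [show g1 (gW 0) = 0 from hκ.2.2] at h2
      exact h2
  intro x u hu t ht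
  set m := inputNorm u with hm
  have hnn : ∀ v : ℝ → U, 0 ≤ inputNorm v := fun v =>
    Real.sSup_nonneg (by rintro _ ⟨s, _, rfl⟩; exact norm_nonneg _)
  -- shifted inputs
  have hsh : ∀ r, 0 ≤ r → IsInput (fun τ => u (τ + r)) ∧ inputNorm (fun τ => u (τ + r)) ≤ m := by
    intro r hr
    have hsub : (fun s => ‖u (s + r)‖) '' Ici 0 ⊆ (fun s => ‖u s‖) '' Ici 0 := by
      rintro _ ⟨s, hs, rfl⟩
      exact ⟨s + r, add_nonneg hs hr, rfl⟩
    refine ⟨⟨hu.1.comp (f := fun τ : ℝ => τ + r) (by fun_prop)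
      (fun s hs => add_nonneg hs hr), hu.2.mono hsub⟩, ?_⟩
    exact csSup_le_csSup hu.2 (Set.Nonempty.image _ nonempty_Ici) hsub
  set c := ψ₂ (χ m) with hc
  have hχm : 0 ≤ χ m := hχ.nonneg (hnn u)
  have hc0 : 0 ≤ c := hψ₂.1.nonneg hχm
  set y : ℝ → ℝ := fun t => V (φ t x u) with hy
  have hyc : ContinuousOn y (Ici 0) := hVc.comp_continuousOn (hcont x u hu)
  have hstep : ∀ s, 0 ≤ s → c < y s → ∀ᶠ z in nhdsWithin s (Ioi s),
      y z ≤ y s - k (Real.log (y s)) * y s * (z - s) := by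
    intro s hs hcs
    have hys : 0 < y s := hc0.trans_lt hcs
    obtain ⟨hI, hN⟩ := hsh s hs
    have hsw := hsandwich (φ s x u)
    have hχn : χ m ≤ ‖φ s x u‖ := by
      by_contra hcon
      have := hψ₂.1.2.1 (norm_nonneg _) hχm (not_le.1 hcon)
      have : y s ≤ ψ₂ ‖φ s x u‖ := hsw.2
      linarith
    have hχ' : χ (inputNorm (fun τ => u (τ + s))) ≤ ‖φ s x u‖ :=
      (hχ.2.1.monotoneOn (hnn _) (hnn u) hN).trans hχn
    have hd := hdiss (φ s x u) _ hI hχ'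
    have hkα := (hk (Real.log (y s))).2.2 ‖φ s x u‖ (norm_nonneg _)
    rw [Real.exp_log hys] at hkα
    have hlt := hkα hsw.1 hsw.2
    have hq0 : 0 < k (Real.log (y s)) * y s := mul_pos (hk0 _) hys
    have hev := eventually_of_limsup_neg (hq0.trans hlt) hd hlt
    have htend : Tendsto (fun z : ℝ => z - s) (nhdsWithin s (Ioi s)) (nhdsWithin 0 (Ioi 0)) := by
      refine tendsto_nhdsWithin_iff.2 ⟨?_, ?_⟩
      · have : Tendsto (fun z : ℝ => z - s) (nhds s) (nhds (s - s)) :=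
          (continuous_id.sub continuous_const).tendsto s
        rw [sub_self] at this
        exact this.mono_left nhdsWithin_le_nhds
      · filter_upwards [self_mem_nhdsWithin] with z hz using (sub_pos.2 (mem_Ioi.1 hz) : 0 < z - s)
    filter_upwards [htend.eventually hev, self_mem_nhdsWithin] with z hz hzs
    have hzs' : 0 < z - s := sub_pos.2 hzs
    have hco := hcoc (z - s) hzs'.le s hs x u hu
    rw [sub_add_cancel] at hco
    rw [← hco, div_lt_iff₀ hzs'] at hz
    have hz' : y z - y s < -(k (Real.log (y s)) * y s) * (z - s) := hz
    linarith
  have hdec : ∀ a b, 0 ≤ a → a ≤ b → (∀ s ∈ Icc a b, c < y s) →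
      H (Real.log (y b)) ≤ H (Real.log (y a)) - (b - a) := by
    intro a b ha hab hgt
    exact decay_lemma hk0 hHd hHs hab (hyc.mono fun s hs => ha.trans hs.1)
      (fun s hs => hc0.trans_lt (hgt s hs))
      (fun s hs => hstep s (ha.trans hs.1) (hgt s ⟨hs.1, hs.2.le⟩))
  have hβnn : 0 ≤ g1 (gW (Real.exp (-t) * W (ψ₂ ‖x‖))) :=
    hκ.nonneg (mul_nonneg (Real.exp_pos _).le (hη.nonneg (norm_nonneg _)))
  have hγnn : 0 ≤ g1 c := hg1.nonneg hc0
  have hψn : 0 ≤ ψ₁ ‖φ t x u‖ := hψ₁.1.nonneg (norm_nonneg _)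
  have hle : ‖φ t x u‖ ≤ g1 (y t) := by
    rw [← hg1i ‖φ t x u‖ (norm_nonneg _)]
    exact hg1.2.1.monotoneOn hψn (hVnn _) (hsandwich _).1
  show ‖φ t x u‖ ≤ g1 (gW (Real.exp (-t) * W (ψ₂ ‖x‖))) + g1 c
  by_cases hyt : y t ≤ c
  · have := hg1.2.1.monotoneOn (hVnn _ : (0:ℝ) ≤ y t) hc0 hyt
    linarith
  push Not at hyt
  -- the trajectory stays above `c` on `[0,t]`
  have habove : ∀ s ∈ Icc 0 t, c < y s := by
    by_contra hcon
    push Not at hcon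
    obtain ⟨s, hs, hsc⟩ := hcon
    let S : Set ℝ := Icc 0 t ∩ {s | y s ≤ c}
    have hScl : IsClosed S :=
      (hyc.mono (Icc_subset_Ici_self : Icc 0 t ⊆ Ici 0)).preimage_isClosed_of_isClosed
        isClosed_Icc isClosed_Iic
    have hSc : IsCompact S := isCompact_Icc.of_isClosed_subset hScl inter_subset_left
    obtain ⟨s0, hs0, hmax⟩ := hSc.exists_isGreatest ⟨s, hs, hsc⟩
    have hs0c : y s0 ≤ c := hs0.2
    have hs0t : s0 < t := lt_of_le_of_ne hs0.1.2 (by rintro rfl; linarith)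
    have hgt : ∀ r, s0 < r → r ≤ t → c < y r := by
      intro r hr hrt
      by_contra hcc
      exact absurd (hmax ⟨⟨hs0.1.1.trans hr.le, hrt⟩, not_lt.1 hcc⟩) (not_le.2 hr)
    have hanti : ∀ r, s0 < r → r ≤ t → y t ≤ y r := by
      intro r hr hrt
      have h1 := hdec r t (hs0.1.1.trans hr.le) hrt
        (fun s hs => hgt s (hr.trans_le hs.1) hs.2)
      have h2 : H (Real.log (y t)) ≤ H (Real.log (y r)) := by linarith
      exact (Real.log_le_log_iff (hc0.trans_lt hyt) (hc0.trans_lt (hgt r hr hrt))).1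
        (hHs.le_iff_le.1 h2)
    have hlim : Tendsto y (nhdsWithin s0 (Ioi s0)) (nhds (y s0)) :=
      ((hyc s0 hs0.1.1).mono (fun z hz => hs0.1.1.trans (le_of_lt hz))).tendsto
    have : y t ≤ y s0 := by
      refine ge_of_tendsto hlim ?_
      filter_upwards [Ioo_mem_nhdsGT hs0t] with z hz using hanti z hz.1 hz.2.le
    linarith
  have h1 := hdec 0 t le_rfl ht habove
  have hy0 : 0 < y 0 := hc0.trans_lt (habove 0 ⟨le_rfl, ht⟩)
  have hyt0 : 0 < y t := hc0.trans_lt hyt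
  have hy0' : y 0 ≤ ψ₂ ‖x‖ := by
    have := (hsandwich x).2
    rw [← hid x u hu] at this
    simpa [hy, hid x u hu] using this
  have hWt : W (y t) ≤ Real.exp (-t) * W (ψ₂ ‖x‖) := by
    calc W (y t) = Real.exp (H (Real.log (y t))) := hW _ hyt0
      _ ≤ Real.exp (-t + H (Real.log (y 0))) := Real.exp_le_exp.2 (by linarith)
      _ = Real.exp (-t) * W (y 0) := by rw [Real.exp_add, hW _ hy0]
      _ ≤ _ := mul_le_mul_of_nonneg_left
        (hWK.1.2.1.monotoneOn hy0.le (hψ₂.1.nonneg (norm_nonneg _)) hy0') (Real.exp_pos _).le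
  have h3 := hκ.2.1.monotoneOn (hWK.1.nonneg hyt0.le)
    (mul_nonneg (Real.exp_pos _).le (hη.nonneg (norm_nonneg _))) hWt
  simp only [hgWi _ hyt0.le] at h3
  linarith
end

section
/- Let X be a normed linear space, U_c a normed linear space (of input functions), and φ : [0,∞) × X × U_c → X a transition map that depends continuously on initial states and inputs, uniformly on compact time intervals: for all x ∈ X, u ∈ U_c, T > 0 and ε > 0 there exists δ > 0 such that ‖x − x′‖_X < δ and ‖u − u′‖_{U_c} < δ imply ‖φ(t,x,u) − φ(t,x′,u′)‖_X < ε for all t ∈ [0,T]. Let X̂ ⊆ X and Û_c ⊆ U_c be dense subsets, and suppose there exist β of class KL and γ of class K such that ‖φ(t,x,u)‖_X ≤ β(‖x‖_X, t) + γ(‖u‖_{U_c}) for all x ∈ X̂, u ∈ Û_c and t ≥ 0. Then the same estimate holds, with the same β and γ, for all x ∈ X, u ∈ U_c and t ≥ 0. -/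
open Filter Set

/-- Density argument: if the transition map depends continuously on initial states and inputs,
uniformly on compact time intervals, and the ISS estimate holds on dense subsets `X̂`, `Û_c`,
then the same ISS estimate (with the same `β` and `γ`) holds on all of `X` and `U_c`. -/
theorem stmt8 {X Uc : Type*} [NormedAddCommGroup X] [NormedAddCommGroup Uc]
    (φ : ℝ → X → Uc → X)
    (hcont : ∀ (x : X) (u : Uc), ∀ T > (0:ℝ), ∀ ε > (0:ℝ), ∃ δ > (0:ℝ),
        ∀ (x' : X) (u' : Uc), ‖x - x'‖ < δ → ‖u - u'‖ < δ →
          ∀ t ∈ Icc (0:ℝ) T, ‖φ t x u - φ t x' u'‖ < ε)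
    (Xhat : Set X) (Uhat : Set Uc) (hXd : Dense Xhat) (hUd : Dense Uhat)
    (β : ℝ → ℝ → ℝ) (γ : ℝ → ℝ) (hβ : ClassKL β) (hγ : ClassK γ)
    (hISS : ∀ x ∈ Xhat, ∀ u ∈ Uhat, ∀ t ≥ (0:ℝ), ‖φ t x u‖ ≤ β ‖x‖ t + γ ‖u‖) :
    ∀ (x : X) (u : Uc), ∀ t ≥ (0:ℝ), ‖φ t x u‖ ≤ β ‖x‖ t + γ ‖u‖ := by
  intro x u t ht
  have hφ : Continuous fun p : X × Uc => φ t p.1 p.2 := by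
    rw [Metric.continuous_iff]
    rintro ⟨x, u⟩ ε hε
    obtain ⟨δ, hδ, h⟩ := hcont x u (t + 1) (by linarith) ε hε
    refine ⟨δ, hδ, ?_⟩
    rintro ⟨x', u'⟩ hd
    rw [Prod.dist_eq, max_lt_iff] at hd
    rw [dist_comm, dist_eq_norm]
    refine h x' u' ?_ ?_ t ⟨ht, by linarith⟩
    · rw [← dist_eq_norm, dist_comm]; exact hd.1
    · rw [← dist_eq_norm, dist_comm]; exact hd.2
  have hb : Continuous fun p : X × Uc => β ‖p.1‖ t :=
    (hβ.1 t ht).1.comp_continuous (f := fun p : X × Uc => ‖p.1‖)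
      (by fun_prop) (fun p => norm_nonneg p.1)
  have hg : Continuous fun p : X × Uc => γ ‖p.2‖ :=
    hγ.1.comp_continuous (by fun_prop) (fun p => norm_nonneg p.2)
  have hcl : IsClosed {p : X × Uc | ‖φ t p.1 p.2‖ ≤ β ‖p.1‖ t + γ ‖p.2‖} :=
    isClosed_le hφ.norm (hb.add hg)
  have hsub : Xhat ×ˢ Uhat ⊆ {p : X × Uc | ‖φ t p.1 p.2‖ ≤ β ‖p.1‖ t + γ ‖p.2‖} :=
    fun p hp => hISS p.1 hp.1 p.2 hp.2 t ht
  exact closure_minimal hsub hcl ((hXd.prod hUd) (x, u))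
end

section
/- Let X and U be Banach spaces, let T(t), t ≥ 0, be a C0-semigroup on X satisfying ‖T(t)‖ ≤ K e^{−ht} for all t ≥ 0 with constants K ≥ 1 and h > 0, let C : U → X be a bounded linear operator, and let g : X × U → X satisfy: for every w > 0 there exists ρ > 0 such that ‖g(x,u)‖_X ≤ w(‖x‖_X + ‖u‖_U) whenever ‖x‖_X ≤ ρ and ‖u‖_U ≤ ρ. Then for every ε ∈ (0,h) there exist ρ* > 0 and constants M, G > 0 such that: for every x₀ ∈ X with ‖x₀‖_X ≤ ρ*, every continuous input u : [0,∞) → U with sup_{s≥0}‖u(s)‖_U ≤ ρ*, and every continuous function x : [0,∞) → X satisfying the variation-of-constants equation x(t) = T(t)x₀ + ∫₀^t T(t−s)(C u(s) + g(x(s),u(s))) ds for all t ≥ 0, one has the fading-memory estimate ‖x(t)‖_X ≤ M e^{−(h−ε)t}‖x₀‖_X + G · sup_{0≤s≤t} e^{−(h−ε)(t−s)} ‖u(s)‖_U for all t ≥ 0. In particular, the semilinear system ẋ = (A+B)x + Cu + g(x,u), whose linearization ẋ = (A+B)x + Cu is ISS, is locally input-to-state stable. -/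
open Filter Set MeasureTheory intervalIntegral

/-- Fading-memory estimate / linearization principle: if the `C₀`-semigroup `T` generated by
the linearization satisfies `‖T(t)‖ ≤ K e^{-ht}` and the nonlinearity `g` is of higher order
near the origin, then for every `ε ∈ (0,h)` solutions of the variation-of-constants equation
with small initial data and small inputs satisfy
`‖x(t)‖ ≤ M e^{-(h-ε)t}‖x₀‖ + G sup_{0≤s≤t} e^{-(h-ε)(t-s)} ‖u(s)‖`;
in particular the semilinear system is locally input-to-state stable. -/
theorem stmt9 {X U : Type*} [NormedAddCommGroup X] [NormedSpace ℝ X] [CompleteSpace X]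
    [NormedAddCommGroup U] [NormedSpace ℝ U]
    (T : ℝ → X →L[ℝ] X)
    (hT0 : T 0 = ContinuousLinearMap.id ℝ X)
    (hTsem : ∀ t ≥ (0:ℝ), ∀ s ≥ (0:ℝ), T (t + s) = (T t).comp (T s))
    (hTcont : ∀ x : X, ContinuousOn (fun t => T t x) (Ici 0))
    (K h : ℝ) (hK : 1 ≤ K) (hh : 0 < h)
    (hTb : ∀ t ≥ (0:ℝ), ‖T t‖ ≤ K * Real.exp (-h * t))
    (C : U →L[ℝ] X)
    (g : X → U → X)
    (hg : ∀ w > (0:ℝ), ∃ ρ > (0:ℝ), ∀ (x : X) (u : U), ‖x‖ ≤ ρ → ‖u‖ ≤ ρ →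
        ‖g x u‖ ≤ w * (‖x‖ + ‖u‖)) :
    ∀ ε : ℝ, 0 < ε → ε < h →
      ∃ ρs > (0:ℝ), ∃ M > (0:ℝ), ∃ G > (0:ℝ),
        ∀ x₀ : X, ‖x₀‖ ≤ ρs →
          ∀ u : ℝ → U, ContinuousOn u (Ici 0) → (∀ s ≥ (0:ℝ), ‖u s‖ ≤ ρs) →
            ∀ x : ℝ → X, ContinuousOn x (Ici 0) →
              (∀ t ≥ (0:ℝ),
                x t = T t x₀ + ∫ s in (0:ℝ)..t, T (t - s) (C (u s) + g (x s) (u s))) →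
              ∀ t ≥ (0:ℝ),
                ‖x t‖ ≤ M * Real.exp (-(h - ε) * t) * ‖x₀‖ +
                  G * sSup ((fun s => Real.exp (-(h - ε) * (t - s)) * ‖u s‖) '' Icc 0 t) := by
  intro ε hε hεh
  have hK0 : 0 < K := by linarith
  obtain ⟨w, hw⟩ : ∃ w, w = ε / (2 * K) := ⟨_, rfl⟩
  have hw0 : 0 < w := by rw [hw]; positivity
  obtain ⟨ρ, hρ, hgρ⟩ := hg w hw0
  obtain ⟨G, hG⟩ : ∃ G, G = 2 * K / ε * (‖C‖ + w) := ⟨_, rfl⟩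
  have hG0 : 0 < G := by
    rw [hG]
    have := norm_nonneg C
    positivity
  obtain ⟨ρs, hρs⟩ : ∃ r, r = ρ / (2 * K + G + 1) := ⟨_, rfl⟩
  have hden : 0 < 2 * K + G + 1 := by linarith
  have hρs0 : 0 < ρs := by rw [hρs]; positivity
  have hρe : ρs * (2 * K + G + 1) = ρ := by rw [hρs]; field_simp
  have hρlt : ρs < ρ := by nlinarith [mul_pos hρs0 hK0, mul_pos hρs0 hG0]
  refine ⟨ρs, hρs0, 2 * K, by linarith, G, hG0, ?_⟩
  intro x₀ hx₀ u hu hub x hx hxe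
  -- elementary facts on the supremum
  have hexp1 : ∀ t s : ℝ, s ≤ t → Real.exp (-(h - ε) * (t - s)) ≤ 1 := by
    intro t s hst
    rw [Real.exp_le_one_iff]
    nlinarith [mul_nonneg (sub_nonneg.2 hεh.le) (sub_nonneg.2 hst)]
  have hel : ∀ t s : ℝ, s ∈ Icc 0 t → Real.exp (-(h - ε) * (t - s)) * ‖u s‖ ≤ ρs := by
    intro t s hs
    calc Real.exp (-(h - ε) * (t - s)) * ‖u s‖ ≤ 1 * ‖u s‖ :=
          mul_le_mul_of_nonneg_right (hexp1 t s hs.2) (norm_nonneg _)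
      _ ≤ ρs := by rw [one_mul]; exact hub s hs.1
  have hSle : ∀ t ≥ (0:ℝ),
      sSup ((fun s => Real.exp (-(h - ε) * (t - s)) * ‖u s‖) '' Icc 0 t) ≤ ρs := by
    intro t ht
    apply csSup_le ((nonempty_Icc.2 ht).image _)
    rintro _ ⟨s, hs, rfl⟩
    exact hel t s hs
  have hleS : ∀ t s : ℝ, s ∈ Icc 0 t → Real.exp (-(h - ε) * (t - s)) * ‖u s‖ ≤
      sSup ((fun s => Real.exp (-(h - ε) * (t - s)) * ‖u s‖) '' Icc 0 t) := by
    intro t s hs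
    apply le_csSup
    · refine ⟨ρs, ?_⟩
      rintro _ ⟨s, hs, rfl⟩
      exact hel t s hs
    · exact ⟨s, hs, rfl⟩
  -- the a priori estimate
  have key : ∀ t ≥ (0:ℝ), (∀ s ∈ Icc 0 t, ‖x s‖ ≤ ρ) →
      ‖x t‖ ≤ 2 * K * Real.exp (-(h - ε) * t) * ‖x₀‖ +
        G * sSup ((fun s => Real.exp (-(h - ε) * (t - s)) * ‖u s‖) '' Icc 0 t) := by
    intro t ht hxρ
    have hS := hleS t
    generalize sSup ((fun s => Real.exp (-(h - ε) * (t - s)) * ‖u s‖) '' Icc 0 t) = S at hS ⊢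
    obtain ⟨V, hV⟩ : ∃ V, V = Real.exp ((h - ε) * t) * S := ⟨_, rfl⟩
    have huV : ∀ s ∈ Icc 0 t, ‖u s‖ ≤ Real.exp (-(h - ε) * s) * V := by
      intro s hs
      have h1 := mul_le_mul_of_nonneg_left (hS s hs) (Real.exp_pos ((h - ε) * (t - s))).le
      rw [← mul_assoc, ← Real.exp_add] at h1
      rw [show (h - ε) * (t - s) + -(h - ε) * (t - s) = 0 by ring, Real.exp_zero, one_mul] at h1
      rw [hV, ← mul_assoc, ← Real.exp_add]
      rwa [show -(h - ε) * s + (h - ε) * t = (h - ε) * (t - s) by ring]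
    have hcont : ContinuousOn (fun s => Real.exp ((h - ε) * s) * ‖x s‖) (Icc 0 t) := by
      apply ContinuousOn.mul
      · fun_prop
      · exact (hx.mono Icc_subset_Ici_self).norm
    obtain ⟨τ, hτ, hmax⟩ := isCompact_Icc.exists_isMaxOn (nonempty_Icc.2 ht) hcont
    obtain ⟨Y, hY⟩ : ∃ Y, Y = Real.exp ((h - ε) * τ) * ‖x τ‖ := ⟨_, rfl⟩
    have hYmax : ∀ s ∈ Icc 0 t, Real.exp ((h - ε) * s) * ‖x s‖ ≤ Y := by
      intro s hs
      rw [hY]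
      exact hmax hs
    have hxY : ∀ s ∈ Icc 0 t, ‖x s‖ ≤ Real.exp (-(h - ε) * s) * Y := by
      intro s hs
      have h1 := mul_le_mul_of_nonneg_left (hYmax s hs) (Real.exp_pos (-(h - ε) * s)).le
      rw [← mul_assoc, ← Real.exp_add] at h1
      rwa [show -(h - ε) * s + (h - ε) * s = 0 by ring, Real.exp_zero, one_mul] at h1
    obtain ⟨D, hD⟩ : ∃ D, D = (‖C‖ + w) * V + w * Y := ⟨_, rfl⟩
    have hV0 : 0 ≤ V := by
      have := (norm_nonneg _).trans (huV 0 ⟨le_rfl, ht⟩)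
      simpa using this
    have hY0 : 0 ≤ Y := by rw [hY]; positivity
    have hD0 : 0 ≤ D := by
      have := norm_nonneg C
      rw [hD]; positivity
    have hint : ‖∫ s in (0:ℝ)..τ, T (τ - s) (C (u s) + g (x s) (u s))‖ ≤
        ∫ s in (0:ℝ)..τ, K * D * Real.exp (-(h - ε) * τ) * Real.exp (-ε * (τ - s)) := by
      apply intervalIntegral.norm_integral_le_of_norm_le hτ.1
      · refine Filter.Eventually.of_forall ?_
        intro s hs
        have hs' : s ∈ Icc 0 t := ⟨hs.1.le, hs.2.trans hτ.2⟩
        have hgs := hgρ (x s) (u s) (hxρ s hs') ((hub s hs'.1).trans hρlt.le)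
        have hC : ‖C (u s)‖ ≤ ‖C‖ * ‖u s‖ := C.le_opNorm _
        have hf : ‖C (u s) + g (x s) (u s)‖ ≤ Real.exp (-(h - ε) * s) * D := by
          have h1 := mul_le_mul_of_nonneg_left (huV s hs')
            (add_nonneg (norm_nonneg C) hw0.le)
          have h2 := mul_le_mul_of_nonneg_left (hxY s hs') hw0.le
          have h3 := norm_add_le (C (u s)) (g (x s) (u s))
          rw [hD]
          linarith
        calc ‖T (τ - s) (C (u s) + g (x s) (u s))‖
            ≤ ‖T (τ - s)‖ * ‖C (u s) + g (x s) (u s)‖ := (T (τ - s)).le_opNorm _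
          _ ≤ (K * Real.exp (-h * (τ - s))) * (Real.exp (-(h - ε) * s) * D) :=
              mul_le_mul (hTb _ (sub_nonneg.2 hs.2)) hf (norm_nonneg _) (by positivity)
          _ = K * D * (Real.exp (-h * (τ - s)) * Real.exp (-(h - ε) * s)) := by ring
          _ = K * D * (Real.exp (-(h - ε) * τ) * Real.exp (-ε * (τ - s))) := by
              rw [← Real.exp_add, ← Real.exp_add]
              congr 2
              ring
          _ = K * D * Real.exp (-(h - ε) * τ) * Real.exp (-ε * (τ - s)) := by ring
      · apply Continuous.intervalIntegrable
        fun_prop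
    have hval : ∫ s in (0:ℝ)..τ, Real.exp (-ε * (τ - s)) ≤ 1 / ε := by
      have hd : ∀ s ∈ uIcc 0 τ, HasDerivAt (fun s => Real.exp (-ε * (τ - s)) / ε)
          (Real.exp (-ε * (τ - s))) s := by
        intro s _
        have h1 := ((((hasDerivAt_id s).const_sub τ).const_mul (-ε)).exp).div_const ε
        have h2 : Real.exp (-ε * (τ - s)) * (-ε * -1) / ε = Real.exp (-ε * (τ - s)) := by
          field_simp
        exact h2 ▸ h1
      rw [intervalIntegral.integral_eq_sub_of_hasDerivAt hd
        (Continuous.intervalIntegrable (by fun_prop) _ _)]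
      simp only [sub_self, mul_zero, Real.exp_zero]
      have : 0 ≤ Real.exp (-ε * (τ - 0)) / ε := by positivity
      linarith
    rw [intervalIntegral.integral_const_mul] at hint
    have hint2 := hint.trans (mul_le_mul_of_nonneg_left hval (by positivity))
    have hT : ‖T τ x₀‖ ≤ K * Real.exp (-(h - ε) * τ) * ‖x₀‖ := by
      refine ((T τ).le_opNorm _).trans (mul_le_mul_of_nonneg_right ?_ (norm_nonneg _))
      refine (hTb τ hτ.1).trans (mul_le_mul_of_nonneg_left ?_ hK0.le)
      rw [Real.exp_le_exp]
      nlinarith [mul_nonneg hε.le hτ.1]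
    have hxτ : ‖x τ‖ ≤ Real.exp (-(h - ε) * τ) * (K * ‖x₀‖ + K * D * (1 / ε)) := by
      rw [hxe τ hτ.1]
      refine (norm_add_le _ _).trans ?_
      linarith
    have hY1 : Y ≤ K * ‖x₀‖ + K * D * (1 / ε) := by
      have h1 := mul_le_mul_of_nonneg_left hxτ (Real.exp_pos ((h - ε) * τ)).le
      rw [← hY, ← mul_assoc, ← Real.exp_add] at h1
      rwa [show (h - ε) * τ + -(h - ε) * τ = 0 by ring, Real.exp_zero, one_mul] at h1
    have hKD : K * D * (1 / ε) = G * V / 2 + Y / 2 := by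
      have : K * D * (1 / ε) = G * V / 2 + (K / ε * w) * Y := by
        rw [hD, hG]; ring
      rw [this, hw]
      field_simp
    have hY2 : Y ≤ 2 * K * ‖x₀‖ + G * V := by linarith
    have hfin := (hxY t ⟨ht, le_rfl⟩).trans
      (mul_le_mul_of_nonneg_left hY2 (Real.exp_pos (-(h - ε) * t)).le)
    have hVS : Real.exp (-(h - ε) * t) * V = S := by
      rw [hV, ← mul_assoc, ← Real.exp_add,
        show -(h - ε) * t + (h - ε) * t = 0 by ring, Real.exp_zero, one_mul]
    calc ‖x t‖ ≤ _ := hfin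
      _ = 2 * K * Real.exp (-(h - ε) * t) * ‖x₀‖ + G * (Real.exp (-(h - ε) * t) * V) := by ring
      _ = _ := by rw [hVS]
  -- bootstrap
  have hx0 : ‖x 0‖ < ρ := by
    have := hxe 0 le_rfl
    rw [intervalIntegral.integral_same, hT0] at this
    simp only [ContinuousLinearMap.id_apply, add_zero] at this
    rw [this]
    linarith
  have hstrict : ∀ t ≥ (0:ℝ), (∀ s ∈ Icc 0 t, ‖x s‖ ≤ ρ) → ‖x t‖ < ρ := by
    intro t ht hb
    have h1 := key t ht hb
    have h2 := mul_le_mul_of_nonneg_left (hSle t ht) hG0.le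
    have h3 : Real.exp (-(h - ε) * t) ≤ 1 := by simpa using hexp1 t 0 ht
    have h4 : 2 * K * Real.exp (-(h - ε) * t) * ‖x₀‖ ≤ 2 * K * 1 * ρs := by gcongr
    linarith
  have hall : ∀ t ≥ (0:ℝ), ‖x t‖ < ρ := by
    intro t ht
    by_contra! hcon
    have hxc : ∀ r, ContinuousOn (fun s => ‖x s‖) (Icc 0 r) :=
      fun r => (hx.mono Icc_subset_Ici_self).norm
    have hcomp : IsCompact (Icc 0 t ∩ (fun s => ‖x s‖) ⁻¹' Ici ρ) :=
      isCompact_Icc.of_isClosed_subset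
        ((hxc t).preimage_isClosed_of_isClosed isClosed_Icc isClosed_Ici) inter_subset_left
    obtain ⟨s0, hs0, hmin⟩ := hcomp.exists_isLeast ⟨t, ⟨ht, le_rfl⟩, hcon⟩
    have hlt : ∀ s ∈ Icc 0 s0, s < s0 → ‖x s‖ < ρ := by
      intro s hs hss
      by_contra! hc
      exact absurd (hmin ⟨⟨hs.1, hs.2.trans hs0.1.2⟩, hc⟩) (not_le.2 hss)
    obtain ⟨s1, hs1, hs1e⟩ := intermediate_value_Icc hs0.1.1 (hxc s0)
      (show ρ ∈ Icc ‖x 0‖ ‖x s0‖ from ⟨hx0.le, hs0.2⟩)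
    simp only at hs1e
    have hs10 : s1 = s0 := by
      rcases hs1.2.lt_or_eq with hl | he
      · exact absurd hs1e (hlt s1 hs1 hl).ne
      · exact he
    rw [hs10] at hs1e
    have := hstrict s0 hs0.1.1 (by
      intro s hs
      rcases hs.2.lt_or_eq with hl | he
      · exact (hlt s hs hl).le
      · rw [he, hs1e])
    linarith
  intro t ht
  exact key t ht (fun s hs => (hall s hs.1).le)
end

section
/- Let X be a real Hilbert space and U a normed linear space. Let D ⊆ X be a linear subspace, R : D → X a linear map, let P : X → X be a bounded self-adjoint linear operator which is coercive, i.e. there is ε > 0 with ⟨Px, x⟩ ≥ ε‖x‖²_X for all x ∈ X, and which satisfies the Lyapunov identity ⟨Rx, Px⟩ + ⟨Px, Rx⟩ = −‖x‖²_X for all x ∈ D. Let C : U → X be a bounded linear operator and let g : X × U → X satisfy: for every w > 0 there exists ρ > 0 such that ‖g(x,u)‖_X ≤ w(‖x‖_X + ‖u‖_U) whenever ‖x‖_X ≤ ρ and ‖u‖_U ≤ ρ. Define V(x) = ⟨Px, x⟩. Then: (i) ε‖x‖²_X ≤ V(x) ≤ ‖P‖·‖x‖²_X for all x ∈ X; and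 (ii) there exist ρ > 0 and c > 0 such that for every x ∈ D with ‖x‖_X ≤ ρ and every u ∈ U with ‖u‖_U ≤ ‖x‖²_X (i.e. ‖x‖_X ≥ χ(‖u‖_U) for the gain χ(r) = √r), one has 2⟨Px, Rx + Cu + g(x,u)⟩ ≤ −c‖x‖²_X. Hence V is a local ISS-Lyapunov function for the system ẋ = Rx + Cu + g(x,u), with gain χ(r) = √r. -/
open Set RealInnerProductSpace

/-- On a real Hilbert space, if the bounded self-adjoint coercive operator `P` satisfies the
Lyapunov identity `⟨Rx,Px⟩ + ⟨Px,Rx⟩ = -‖x‖²` on the domain `D` of `R`, then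
`V(x) = ⟨Px,x⟩` is a local ISS-Lyapunov function for `ẋ = Rx + Cu + g(x,u)` with gain
`χ(r) = √r`: (i) `ε‖x‖² ≤ V(x) ≤ ‖P‖‖x‖²`, and (ii) there exist `ρ, c > 0` such that
`‖x‖ ≤ ρ` and `‖u‖ ≤ ‖x‖²` imply `2⟨Px, Rx + Cu + g(x,u)⟩ ≤ -c‖x‖²`. -/
theorem stmt10 {X U : Type*} [NormedAddCommGroup X] [InnerProductSpace ℝ X] [CompleteSpace X]
    [NormedAddCommGroup U] [NormedSpace ℝ U]
    (D : Submodule ℝ X) (R : D →ₗ[ℝ] X)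
    (P : X →L[ℝ] X)
    (hPsa : ∀ x y : X, ⟪P x, y⟫ = ⟪x, P y⟫)
    (ε : ℝ) (hε : 0 < ε)
    (hPcoer : ∀ x : X, ε * ‖x‖ ^ 2 ≤ ⟪P x, x⟫)
    (hLyap : ∀ x : D, ⟪R x, P (x : X)⟫ + ⟪P (x : X), R x⟫ = -‖(x : X)‖ ^ 2)
    (C : U →L[ℝ] X)
    (g : X → U → X)
    (hg : ∀ w > (0:ℝ), ∃ ρ > (0:ℝ), ∀ (x : X) (u : U), ‖x‖ ≤ ρ → ‖u‖ ≤ ρ →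
        ‖g x u‖ ≤ w * (‖x‖ + ‖u‖)) :
    (∀ x : X, ε * ‖x‖ ^ 2 ≤ ⟪P x, x⟫ ∧ ⟪P x, x⟫ ≤ ‖P‖ * ‖x‖ ^ 2) ∧
    (∃ ρ > (0:ℝ), ∃ c > (0:ℝ), ∀ x : D, ‖(x : X)‖ ≤ ρ →
        ∀ u : U, ‖u‖ ≤ ‖(x : X)‖ ^ 2 →
          2 * ⟪P (x : X), R x + C u + g (x : X) u⟫ ≤ -c * ‖(x : X)‖ ^ 2) := by
  have hPn : ∀ x : X, ‖P x‖ ≤ ‖P‖ * ‖x‖ := P.le_opNorm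
  have hp : 0 ≤ ‖P‖ := norm_nonneg P
  have hK : 0 ≤ ‖C‖ := norm_nonneg C
  have hpK : 0 ≤ ‖P‖ * ‖C‖ := mul_nonneg hp hK
  refine ⟨fun x => ⟨hPcoer x, ?_⟩, ?_⟩
  · calc ⟪P x, x⟫ ≤ ‖P x‖ * ‖x‖ := real_inner_le_norm _ _
      _ ≤ (‖P‖ * ‖x‖) * ‖x‖ := by gcongr; exact hPn x
      _ = ‖P‖ * ‖x‖ ^ 2 := by ring
  obtain ⟨r, hr, hgr⟩ := hg (1 / (16 * (‖P‖ + 1))) (by positivity)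
  refine ⟨min (min r 1) (1 / (8 * (‖P‖ * ‖C‖ + 1))), by positivity, 1 / 2, by norm_num, ?_⟩
  intro x hx u hu
  have hx1 : ‖(x : X)‖ ≤ r := hx.trans ((min_le_left _ _).trans (min_le_left _ _))
  have hx2 : ‖(x : X)‖ ≤ 1 := hx.trans ((min_le_left _ _).trans (min_le_right _ _))
  have hx3 : ‖(x : X)‖ ≤ 1 / (8 * (‖P‖ * ‖C‖ + 1)) := hx.trans (min_le_right _ _)
  have hn : 0 ≤ ‖(x : X)‖ := norm_nonneg _
  have hun : ‖u‖ ≤ ‖(x : X)‖ := by nlinarith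
  have hg1 := hgr x u hx1 (hun.trans hx1)
  have hL := hLyap x
  rw [real_inner_comm] at hL
  have h1 : ⟪P (x : X), C u⟫ ≤ ‖(x : X)‖ ^ 2 / 8 := by
    calc ⟪P (x : X), C u⟫ ≤ ‖P (x : X)‖ * ‖C u‖ := real_inner_le_norm _ _
      _ ≤ (‖P‖ * ‖(x : X)‖) * (‖C‖ * ‖(x : X)‖ ^ 2) := by
        gcongr
        · exact hPn _
        · exact (C.le_opNorm u).trans (by gcongr)
      _ = (‖P‖ * ‖C‖ * ‖(x : X)‖) * ‖(x : X)‖ ^ 2 := by ring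
      _ ≤ (1 / 8) * ‖(x : X)‖ ^ 2 := by
        gcongr
        rw [le_div_iff₀ (by positivity)] at hx3
        nlinarith
      _ = _ := by ring
  have h2 : ⟪P (x : X), g (x : X) u⟫ ≤ ‖(x : X)‖ ^ 2 / 8 := by
    have hw : ‖P‖ * (1 / (16 * (‖P‖ + 1))) ≤ 1 / 16 := by
      rw [mul_one_div, div_le_div_iff₀ (by positivity) (by norm_num)]
      linarith
    calc ⟪P (x : X), g (x : X) u⟫ ≤ ‖P (x : X)‖ * ‖g (x : X) u‖ := real_inner_le_norm _ _
      _ ≤ (‖P‖ * ‖(x : X)‖) * (1 / (16 * (‖P‖ + 1)) * (‖(x : X)‖ + ‖(x : X)‖)) := by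
        gcongr
        · exact hPn _
        · exact hg1.trans (by gcongr)
      _ = (‖P‖ * (1 / (16 * (‖P‖ + 1)))) * (2 * ‖(x : X)‖ ^ 2) := by ring
      _ ≤ (1 / 16) * (2 * ‖(x : X)‖ ^ 2) := by gcongr
      _ = _ := by ring
  rw [inner_add_right, inner_add_right]
  linarith
end

section
/- Let s : [0,π] → ℝ be twice continuously differentiable with s(0) = s(π) = 0, and let f : ℝ → ℝ be continuously differentiable with f(0) = 0 and f′(y) ≥ 0 for all y ∈ ℝ. Then ∫₀^π ( s″(x) − f(s(x)) )² dx ≥ ∫₀^π ( s′(x) )² dx. -/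
open Set MeasureTheory intervalIntegral

/-- For a twice continuously differentiable `s : [0,π] → ℝ` with `s(0) = s(π) = 0` and a
continuously differentiable `f : ℝ → ℝ` with `f(0) = 0` and `f' ≥ 0`, one has
`∫₀^π (s'' - f(s))² dx ≥ ∫₀^π (s')² dx`. -/
theorem stmt12 (s s' s'' : ℝ → ℝ)
    (hs' : ∀ x ∈ Icc (0:ℝ) Real.pi, HasDerivWithinAt s (s' x) (Icc 0 Real.pi) x)
    (hs'' : ∀ x ∈ Icc (0:ℝ) Real.pi, HasDerivWithinAt s' (s'' x) (Icc 0 Real.pi) x)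
    (hs''c : ContinuousOn s'' (Icc 0 Real.pi))
    (hs0 : s 0 = 0) (hsπ : s Real.pi = 0)
    (f : ℝ → ℝ) (hf : ContDiff ℝ 1 f) (hf0 : f 0 = 0)
    (hf' : ∀ y : ℝ, 0 ≤ deriv f y) :
    ∫ x in (0:ℝ)..Real.pi, (s' x) ^ 2 ≤
      ∫ x in (0:ℝ)..Real.pi, (s'' x - f (s x)) ^ 2 := by
  have hpi := Real.pi_pos
  have hsc : ContinuousOn s (Icc 0 Real.pi) := fun x hx => (hs' x hx).continuousWithinAt
  have hs'c : ContinuousOn s' (Icc 0 Real.pi) := fun x hx => (hs'' x hx).continuousWithinAt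
  have hfsc : ContinuousOn (fun x => f (s x)) (Icc 0 Real.pi) :=
    hf.continuous.comp_continuousOn hsc
  have c1 : ContinuousOn (fun x => (s' x) ^ 2) (Icc 0 Real.pi) := hs'c.pow 2
  have c2 : ContinuousOn (fun x => (s'' x - f (s x)) ^ 2) (Icc 0 Real.pi) :=
    (hs''c.sub hfsc).pow 2
  have key : ∀ l : ℝ, 0 < l → l < 1 → l ^ 2 * ∫ x in (0:ℝ)..Real.pi, (s' x) ^ 2 ≤
      ∫ x in (0:ℝ)..Real.pi, (s'' x - f (s x)) ^ 2 := by
    intro l hl0 hl1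
    have hcos : ∀ x ∈ Icc (0:ℝ) Real.pi, Real.cos (l * (x - Real.pi / 2)) ≠ 0 := by
      intro x hx
      apply ne_of_gt
      apply Real.cos_pos_of_mem_Ioo
      constructor <;> nlinarith [hx.1, hx.2, mul_nonneg hl0.le hx.1,
        mul_nonneg hl0.le (sub_nonneg.2 hx.2), mul_pos hpi (sub_pos.2 hl1)]
    have hG : ∀ x ∈ Icc (0:ℝ) Real.pi, HasDerivWithinAt
        (fun x => -2 * (s' x * f (s x)) - 2 * l ^ 2 * (s x * s' x)
          - l ^ 3 * (s x ^ 2 * Real.tan (l * (x - Real.pi / 2))))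
        (-2 * (s'' x * f (s x) + s' x * (deriv f (s x) * s' x))
          - 2 * l ^ 2 * (s' x * s' x + s x * s'' x)
          - l ^ 3 * (2 * s x * s' x * Real.tan (l * (x - Real.pi / 2))
            + s x ^ 2 * (1 / Real.cos (l * (x - Real.pi / 2)) ^ 2 * l)))
        (Icc 0 Real.pi) x := by
      intro x hx
      have d1 := hs' x hx
      have d2 := hs'' x hx
      have df : HasDerivAt f (deriv f (s x)) (s x) :=
        (hf.differentiable (by norm_num) (s x)).hasDerivAt
      have d3 := df.comp_hasDerivWithinAt x d1
      have d4 : HasDerivAt (fun x : ℝ => l * (x - Real.pi / 2)) l x := by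
        simpa using ((hasDerivAt_id x).sub_const (Real.pi / 2)).const_mul l
      have d5 := ((Real.hasDerivAt_tan (hcos x hx)).comp x d4).hasDerivWithinAt
        (s := Icc 0 Real.pi)
      have d6 : HasDerivWithinAt (fun x => s x ^ 2) (2 * s x * s' x) (Icc 0 Real.pi) x := by
        have := d1.pow 2
        norm_num at this
        exact this
      exact (((d2.mul d3).const_mul (-2)).sub ((d1.mul d2).const_mul (2 * l ^ 2))).sub
        ((d6.mul d5).const_mul (l ^ 3))
    have h := sub_le_integral_of_hasDeriv_right_of_le (a := 0) (b := Real.pi) hpi.le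
      (φ := fun x => (s'' x - f (s x)) ^ 2 - l ^ 2 * s' x ^ 2)
      (fun x hx => (hG x hx).continuousWithinAt)
      (fun x hx => ((hG x (Ioo_subset_Icc_self hx)).hasDerivAt
        (Icc_mem_nhds hx.1 hx.2)).hasDerivWithinAt)
      ((c2.sub (c1.const_mul (l ^ 2))).integrableOn_Icc)
      (by
        intro x hx
        have hc := hcos x (Ioo_subset_Icc_self hx)
        have ht : 1 / Real.cos (l * (x - Real.pi / 2)) ^ 2
            = 1 + Real.tan (l * (x - Real.pi / 2)) ^ 2 := by
          generalize l * (x - Real.pi / 2) = y at hc ⊢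
          rw [Real.tan_eq_sin_div_cos]
          field_simp
          linarith [Real.sin_sq_add_cos_sq y]
        rw [ht]
        generalize Real.tan (l * (x - Real.pi / 2)) = t
        have a1 := mul_nonneg (hf' (s x)) (sq_nonneg (s' x))
        have a2 := sq_nonneg (s'' x + l ^ 2 * s x)
        have a3 := sq_nonneg (l * (s' x + l * t * s x))
        have a4 := sq_nonneg (f (s x))
        linear_combination 2 * a1 + a2 + a3 + a4)
    rw [intervalIntegral.integral_sub, intervalIntegral.integral_const_mul] at h
    · simp only [hs0, hsπ, hf0] at h
      norm_num at h
      exact h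
    · exact (c2.mono (by rw [uIcc_of_le hpi.le])).intervalIntegrable
    · exact ((c1.const_mul (l ^ 2)).mono (by rw [uIcc_of_le hpi.le])).intervalIntegrable
  have lim : Filter.Tendsto (fun l : ℝ => l ^ 2 * ∫ x in (0:ℝ)..Real.pi, (s' x) ^ 2)
      (nhdsWithin 1 (Iio 1)) (nhds (∫ x in (0:ℝ)..Real.pi, (s' x) ^ 2)) := by
    have : Continuous (fun l : ℝ => l ^ 2 * ∫ x in (0:ℝ)..Real.pi, (s' x) ^ 2) := by fun_prop
    simpa using (this.tendsto 1).mono_left nhdsWithin_le_nhds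
  refine le_of_tendsto lim ?_
  filter_upwards [Ioo_mem_nhdsLT (zero_lt_one' ℝ)] with l hl
  exact key l hl.1 hl.2
end

section
/- Let s : [0,π] → ℝ be continuously differentiable with s(0) = s(π) = 0 and let f : ℝ → ℝ be continuous, odd (f(−y) = −f(y) for all y) and non-decreasing. Write ‖s′‖ = ( ∫₀^π (s′(x))² dx )^{1/2} and define V(s) = ∫₀^π ( (1/2)(s′(x))² + ∫₀^{s(x)} f(y) dy ) dx. Then (1/2)‖s′‖² ≤ V(s) ≤ (1/2)‖s′‖² + π ∫₀^{√π · ‖s′‖} f(y) dy. In particular, there are functions ψ₁, ψ₂ of class K∞ (namely ψ₁(r) = r²/2 and ψ₂(r) = r²/2 + π∫₀^{√π r} f(y)dy, assuming f is strictly increasing and unbounded) with ψ₁(‖s‖_{H¹₀}) ≤ V(s) ≤ ψ₂(‖s‖_{H¹₀}), where ‖s‖_{H¹₀} = ‖s′‖. -/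
open Filter Set MeasureTheory intervalIntegral

theorem aux_even (f : ℝ → ℝ) (hodd : ∀ y : ℝ, f (-y) = -f y) (r : ℝ) :
    ∫ y in (0:ℝ)..(-r), f y = ∫ y in (0:ℝ)..r, f y := by
  have h := intervalIntegral.integral_comp_neg (a := 0) (b := r) f
  simp only [hodd, intervalIntegral.integral_neg, neg_zero] at h
  rw [intervalIntegral.integral_symm, ← h, neg_neg]

theorem aux_mono (f : ℝ → ℝ) (hfc : Continuous f) (hodd : ∀ y : ℝ, f (-y) = -f y)
    (hmono : Monotone f) {a b : ℝ} (ha : 0 ≤ a) (hab : a ≤ b) :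
    ∫ y in (0:ℝ)..a, f y ≤ ∫ y in (0:ℝ)..b, f y := by
  have h0 : f 0 = 0 := by
    have := hodd 0
    rw [neg_zero] at this
    linarith
  have h1 := intervalIntegral.integral_add_adjacent_intervals
    (hfc.intervalIntegrable (μ := volume) 0 a) (hfc.intervalIntegrable a b)
  have h2 : 0 ≤ ∫ y in a..b, f y := by
    apply intervalIntegral.integral_nonneg hab
    intro u hu
    rw [← h0]
    exact hmono (ha.trans hu.1)
  linarith

theorem aux_abs (f : ℝ → ℝ) (hodd : ∀ y : ℝ, f (-y) = -f y) (r : ℝ) :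
    ∫ y in (0:ℝ)..r, f y = ∫ y in (0:ℝ)..|r|, f y := by
  rcases abs_choice r with h | h <;> rw [h]
  rw [aux_even f hodd]

theorem aux_cs (s s' : ℝ → ℝ)
    (hs' : ∀ x ∈ Icc (0:ℝ) Real.pi, HasDerivWithinAt s (s' x) (Icc 0 Real.pi) x)
    (hs'c : ContinuousOn s' (Icc 0 Real.pi)) (hs0 : s 0 = 0) (x : ℝ)
    (hx : x ∈ Icc (0:ℝ) Real.pi) :
    |s x| ≤ Real.sqrt Real.pi * Real.sqrt (∫ x in (0:ℝ)..Real.pi, (s' x) ^ 2) := by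
  have hsub : Icc 0 x ⊆ Icc 0 Real.pi := Icc_subset_Icc le_rfl hx.2
  have hc : ContinuousOn s' (uIcc 0 x) := by
    rw [uIcc_of_le hx.1]; exact hs'c.mono hsub
  have hc2 : ContinuousOn s' (uIcc x Real.pi) := by
    rw [uIcc_of_le hx.2]; exact hs'c.mono (Icc_subset_Icc hx.1 le_rfl)
  have hi : IntervalIntegrable s' volume 0 x := hc.intervalIntegrable
  have hi2 : IntervalIntegrable (fun y => s' y ^ 2) volume 0 x := (hc.pow 2).intervalIntegrable
  have hi3 : IntervalIntegrable (fun y => s' y ^ 2) volume x Real.pi :=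
    (hc2.pow 2).intervalIntegrable
  have ftc : ∫ y in (0:ℝ)..x, s' y = s x := by
    rw [intervalIntegral.integral_eq_sub_of_hasDerivAt_of_le hx.1 (f := s) _ _ hi, hs0, sub_zero]
    · exact fun y hy => ((hs' y (hsub hy)).continuousWithinAt).mono hsub
    · intro y hy
      exact (hs' y (hsub (Ioo_subset_Icc_self hy))).hasDerivAt
        (Icc_mem_nhds hy.1 (hy.2.trans_le hx.2))
  have hsplit := intervalIntegral.integral_add_adjacent_intervals hi2 hi3
  have hpos3 : 0 ≤ ∫ y in x..Real.pi, s' y ^ 2 :=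
    intervalIntegral.integral_nonneg hx.2 (fun u _ => sq_nonneg _)
  have hpos2 : 0 ≤ ∫ y in (0:ℝ)..x, s' y ^ 2 :=
    intervalIntegral.integral_nonneg hx.1 (fun u _ => sq_nonneg _)
  have hq : 0 ≤ ∫ y in (0:ℝ)..x, (x * s' y - s x) ^ 2 :=
    intervalIntegral.integral_nonneg hx.1 (fun u _ => sq_nonneg _)
  have he : ∫ y in (0:ℝ)..x, (x * s' y - s x) ^ 2
      = x ^ 2 * (∫ y in (0:ℝ)..x, s' y ^ 2) - 2 * x * s x * s x + s x ^ 2 * x := by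
    have : ∀ y, (x * s' y - s x) ^ 2 = (x ^ 2 * s' y ^ 2 - 2 * x * s x * s' y) + s x ^ 2 := by
      intro y; ring
    simp only [this]
    rw [intervalIntegral.integral_add ((hi2.const_mul _).sub (hi.const_mul _))
      intervalIntegrable_const, intervalIntegral.integral_sub (hi2.const_mul _) (hi.const_mul _),
      intervalIntegral.integral_const_mul, intervalIntegral.integral_const_mul, ftc,
      intervalIntegral.integral_const, smul_eq_mul]
    ring
  rw [he] at hq
  have key : s x ^ 2 ≤ x * ∫ y in (0:ℝ)..x, s' y ^ 2 := by
    rcases hx.1.eq_or_lt with h | h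
    · rw [← h, hs0]; simp
    · by_contra hcon
      push Not at hcon
      nlinarith [mul_pos h (sub_pos.2 hcon)]
  rw [← Real.sqrt_mul Real.pi_pos.le]
  apply Real.abs_le_sqrt
  refine key.trans (mul_le_mul hx.2 (by linarith) hpos2 Real.pi_pos.le)

/-- For `s ∈ C¹([0,π])` with `s(0) = s(π) = 0`, odd non-decreasing continuous `f`, with
`N = ‖s‖_{H¹₀} = (∫₀^π (s')²)^{1/2}` and `V = ∫₀^π ((1/2)(s')² + ∫₀^{s(x)} f(y) dy) dx`, one has
`(1/2)N² ≤ V ≤ (1/2)N² + π ∫₀^{√π N} f(y) dy`; in particular (for strictly increasing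
unbounded `f`) the bounding functions `ψ₁(r) = r²/2` and `ψ₂(r) = r²/2 + π∫₀^{√π r} f` are of
class `K∞`. -/
theorem stmt14 (s s' : ℝ → ℝ)
    (hs' : ∀ x ∈ Icc (0:ℝ) Real.pi, HasDerivWithinAt s (s' x) (Icc 0 Real.pi) x)
    (hs'c : ContinuousOn s' (Icc 0 Real.pi))
    (hs0 : s 0 = 0) (hsπ : s Real.pi = 0)
    (f : ℝ → ℝ) (hfc : Continuous f) (hodd : ∀ y : ℝ, f (-y) = -f y) (hmono : Monotone f)
    (N V : ℝ)
    (hN : N = Real.sqrt (∫ x in (0:ℝ)..Real.pi, (s' x) ^ 2))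
    (hV : V = ∫ x in (0:ℝ)..Real.pi,
        ((1 / 2) * (s' x) ^ 2 + ∫ y in (0:ℝ)..(s x), f y)) :
    (1 / 2) * N ^ 2 ≤ V ∧
    V ≤ (1 / 2) * N ^ 2 + Real.pi * ∫ y in (0:ℝ)..(Real.sqrt Real.pi * N), f y ∧
    (StrictMono f → (∀ M : ℝ, ∃ r : ℝ, M < f r) →
      ClassKinf (fun r => r ^ 2 / 2) ∧
      ClassKinf (fun r => r ^ 2 / 2 + Real.pi * ∫ y in (0:ℝ)..(Real.sqrt Real.pi * r), f y)) := by
  have hpi := Real.pi_pos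
  have huIcc : uIcc 0 Real.pi = Icc 0 Real.pi := uIcc_of_le hpi.le
  have hsc : ContinuousOn s (uIcc 0 Real.pi) := by
    rw [huIcc]; exact fun y hy => (hs' y hy).continuousWithinAt
  have hFc : Continuous (fun r : ℝ => ∫ y in (0:ℝ)..r, f y) :=
    intervalIntegral.continuous_primitive (fun a b => hfc.intervalIntegrable a b) 0
  have hi1 : IntervalIntegrable (fun x => (1 / 2) * s' x ^ 2) volume 0 Real.pi := by
    apply ContinuousOn.intervalIntegrable
    rw [huIcc]
    exact continuousOn_const.mul (hs'c.pow 2)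
  have hi2 : IntervalIntegrable (fun x => ∫ y in (0:ℝ)..(s x), f y) volume 0 Real.pi :=
    (hFc.comp_continuousOn hsc).intervalIntegrable
  have hNsq : N ^ 2 = ∫ x in (0:ℝ)..Real.pi, (s' x) ^ 2 := by
    rw [hN, Real.sq_sqrt]
    exact intervalIntegral.integral_nonneg hpi.le (fun u _ => sq_nonneg _)
  have hV2 : V = (1 / 2) * N ^ 2 + ∫ x in (0:ℝ)..Real.pi, ∫ y in (0:ℝ)..(s x), f y := by
    rw [hV, intervalIntegral.integral_add hi1 hi2, intervalIntegral.integral_const_mul, hNsq]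
  refine ⟨?_, ?_, ?_⟩
  · have : 0 ≤ ∫ x in (0:ℝ)..Real.pi, ∫ y in (0:ℝ)..(s x), f y := by
      apply intervalIntegral.integral_nonneg hpi.le
      intro x _
      rw [aux_abs f hodd]
      simpa using aux_mono f hfc hodd hmono le_rfl (abs_nonneg (s x))
    linarith
  · have : ∫ x in (0:ℝ)..Real.pi, ∫ y in (0:ℝ)..(s x), f y
        ≤ ∫ _x in (0:ℝ)..Real.pi, ∫ y in (0:ℝ)..(Real.sqrt Real.pi * N), f y := by
      apply intervalIntegral.integral_mono_on hpi.le hi2 intervalIntegrable_const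
      intro x hx
      rw [aux_abs f hodd]
      apply aux_mono f hfc hodd hmono (abs_nonneg _)
      rw [hN]
      exact aux_cs s s' hs' hs'c hs0 x hx
    rw [intervalIntegral.integral_const, smul_eq_mul, sub_zero] at this
    linarith
  · intro _ _
    have hunb : ∀ M : ℝ, M < (|M| + 2) ^ 2 / 2 := by
      intro M
      nlinarith [le_abs_self M, abs_nonneg M]
    have hst : ∀ a b : ℝ, 0 ≤ a → a < b → a ^ 2 / 2 < b ^ 2 / 2 := by
      intro a b ha hab
      nlinarith
    have hF0 : ∀ r : ℝ, 0 ≤ r → 0 ≤ ∫ y in (0:ℝ)..(Real.sqrt Real.pi * r), f y := by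
      intro r hr
      simpa using aux_mono f hfc hodd hmono le_rfl (mul_nonneg (Real.sqrt_nonneg Real.pi) hr)
    refine ⟨⟨⟨by fun_prop, fun a ha b _ hab => hst a b ha hab, by norm_num⟩,
      fun M => ⟨|M| + 2, by positivity, hunb M⟩⟩, ⟨⟨?_, ?_, by simp⟩, ?_⟩⟩
    · have h1 : Continuous (fun r : ℝ => ∫ y in (0:ℝ)..(Real.sqrt Real.pi * r), f y) :=
        hFc.comp (continuous_const.mul continuous_id)
      exact (((continuous_id.pow 2).div_const 2).add (continuous_const.mul h1)).continuousOn
    · intro a ha b _ hab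
      have h1 := hst a b ha hab
      have h2 := aux_mono f hfc hodd hmono (mul_nonneg (Real.sqrt_nonneg Real.pi) ha)
        (mul_le_mul_of_nonneg_left hab.le (Real.sqrt_nonneg Real.pi))
      have h3 := mul_le_mul_of_nonneg_left h2 hpi.le
      exact add_lt_add_of_lt_of_le h1 h3
    · intro M
      have hp : (0:ℝ) ≤ |M| + 2 := by positivity
      exact ⟨|M| + 2, hp, lt_add_of_lt_of_nonneg (hunb M) (mul_nonneg hpi.le (hF0 _ hp))⟩
end

section
/- Let n ≥ 1, let X₁, …, X_n be real Hilbert spaces and U a normed linear space. For each i let D(A_i) ⊆ X_i be a linear subspace and A_i : D(A_i) → X_i a linear map; let P_i : X_i → X_i be a bounded self-adjoint linear operator satisfying ⟨A_i x_i, P_i x_i⟩ + ⟨P_i x_i, A_i x_i⟩ ≤ −‖x_i‖²_{X_i} for all x_i ∈ D(A_i); let B_{ij} : X_j → X_i be bounded linear operators with B_{ii} = 0, and C_i : U → X_i bounded linear operators. Fix ε ∈ (0,1). Then for every i, every u ∈ U and every tuple (x₁,…,x_n) with x_j ∈ X_j and x_i ∈ D(A_i), the gain condition ‖x_i‖_{X_i}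 ≥ (2‖P_i‖/(1−ε)) · ( Σ_{j≠i} ‖B_{ij}‖·‖x_j‖_{X_j} + ‖C_i‖·‖u‖_U ) implies 2⟨P_i x_i, A_i x_i + Σ_{j=1}^n B_{ij} x_j + C_i u⟩ ≤ −ε‖x_i‖²_{X_i}. Hence V_i(x_i) = ⟨P_i x_i, x_i⟩ is an ISS-Lyapunov function for the i-th subsystem ẋ_i = A_i x_i + Σ_j B_{ij} x_j + C_i u of the interconnected linear system, with the states x_j (j ≠ i) and u regarded as inputs. -/
open Set RealInnerProductSpace

/-- For the interconnected linear system `ẋᵢ = Aᵢxᵢ + Σⱼ Bᵢⱼxⱼ + Cᵢu` over Hilbert spaces,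
with `Pᵢ` bounded self-adjoint satisfying `⟨Aᵢxᵢ,Pᵢxᵢ⟩ + ⟨Pᵢxᵢ,Aᵢxᵢ⟩ ≤ -‖xᵢ‖²`, the gain
condition `‖xᵢ‖ ≥ (2‖Pᵢ‖/(1-ε))(Σ_{j≠i}‖Bᵢⱼ‖‖xⱼ‖ + ‖Cᵢ‖‖u‖)` implies the dissipation
inequality `2⟨Pᵢxᵢ, Aᵢxᵢ + Σⱼ Bᵢⱼxⱼ + Cᵢu⟩ ≤ -ε‖xᵢ‖²`; hence `Vᵢ(xᵢ) = ⟨Pᵢxᵢ,xᵢ⟩` is an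
ISS-Lyapunov function for the `i`-th subsystem. -/
theorem stmt15 {U : Type*} [NormedAddCommGroup U] [NormedSpace ℝ U]
    (n : ℕ) (hn : 1 ≤ n)
    (X : Fin n → Type*) [∀ i, NormedAddCommGroup (X i)] [∀ i, InnerProductSpace ℝ (X i)]
    [∀ i, CompleteSpace (X i)]
    (D : ∀ i, Submodule ℝ (X i)) (A : ∀ i, D i →ₗ[ℝ] X i)
    (P : ∀ i, X i →L[ℝ] X i)
    (hPsa : ∀ i, ∀ x y : X i, ⟪P i x, y⟫ = ⟪x, P i y⟫)
    (hLyap : ∀ i, ∀ x : D i,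
        ⟪A i x, P i (x : X i)⟫ + ⟪P i (x : X i), A i x⟫ ≤ -‖(x : X i)‖ ^ 2)
    (B : ∀ i j, X j →L[ℝ] X i) (hBdiag : ∀ i, B i i = 0)
    (C : ∀ i, U →L[ℝ] X i)
    (ε : ℝ) (hε0 : 0 < ε) (hε1 : ε < 1) :
    ∀ i : Fin n, ∀ u : U, ∀ x : (∀ j, X j), ∀ hx : x i ∈ D i,
      (2 * ‖P i‖ / (1 - ε)) *
          ((∑ j ∈ Finset.univ.erase i, ‖B i j‖ * ‖x j‖) + ‖C i‖ * ‖u‖) ≤ ‖x i‖ →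
        2 * ⟪P i (x i), A i ⟨x i, hx⟩ + (∑ j, B i j (x j)) + C i u⟫ ≤ -ε * ‖x i‖ ^ 2 := by
  intro i u x hx hg
  have hL := hLyap i ⟨x i, hx⟩
  simp only at hL
  rw [real_inner_comm] at hL
  set S := (∑ j ∈ Finset.univ.erase i, ‖B i j‖ * ‖x j‖) + ‖C i‖ * ‖u‖ with hS
  have hsum : (∑ j, B i j (x j)) = ∑ j ∈ Finset.univ.erase i, B i j (x j) := by
    rw [← Finset.add_sum_erase _ _ (Finset.mem_univ i), hBdiag i]
    simp
  have hnorm : ‖(∑ j, B i j (x j)) + C i u‖ ≤ S := by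
    rw [hsum]
    refine (norm_add_le _ _).trans (add_le_add ?_ ((C i).le_opNorm u))
    exact (norm_sum_le _ _).trans (Finset.sum_le_sum fun j _ => (B i j).le_opNorm (x j))
  have hin : ⟪P i (x i), (∑ j, B i j (x j)) + C i u⟫ ≤ (‖P i‖ * ‖x i‖) * S :=
    (real_inner_le_norm _ _).trans
      (mul_le_mul ((P i).le_opNorm _) hnorm (norm_nonneg _) (by positivity))
  have h1 : 0 < 1 - ε := by linarith
  have hg2 : 2 * ‖P i‖ * S ≤ (1 - ε) * ‖x i‖ := by
    rw [div_mul_eq_mul_div, div_le_iff₀ h1] at hg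
    linarith
  have hg3 := mul_le_mul_of_nonneg_right hg2 (norm_nonneg (x i))
  rw [add_assoc, inner_add_right]
  nlinarith
end
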